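/- arXiv:1102.2764 — 5 statements merged into one kernel-verified Lean document; each statement's English description precedes it below -/
import Mathlib

section
/- For every y in the interior P° of P, the determinant of the Hessian of u⁰ satisfies det(D²u⁰(y)) = Σ_{1 ≤ i₁ < ⋯ < iₙ ≤ d} det(n⁽ⁱ¹⁾,…,n⁽ⁱⁿ⁾)² / (l_{i₁}(y) ⋯ l_{iₙ}(y)), where det(n⁽ⁱ¹⁾,…,n⁽ⁱⁿ⁾) denotes the determinant of the n×n matrix with columns n⁽ⁱ¹⁾,…,n⁽ⁱⁿ⁾. -/
noncomputable section

/-- Dot product on `Fin n → ℝ`. -/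
def dotp {n : ℕ} (x y : Fin n → ℝ) : ℝ := ∑ j, x j * y j

/-- The affine functions `lᵢ(y) = ⟨y, n⁽ⁱ⁾⟩ + 1`. -/
def lfun {n d : ℕ} (N : Fin d → Fin n → ℤ) (i : Fin d) (y : Fin n → ℝ) : ℝ :=
  (∑ j, y j * (N i j : ℝ)) + 1

/-- The dual polytope `P = {y : ⟨y, n⁽ⁱ⁾⟩ ≥ -1 for all i}`. -/
def Pset {n d : ℕ} (N : Fin d → Fin n → ℤ) : Set (Fin n → ℝ) :=
  {y | ∀ i, (∑ j, y j * (N i j : ℝ)) ≥ -1}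

/-- The function `u⁰(y) = ∑ᵢ lᵢ(y) log lᵢ(y)`. -/
def u0 {n d : ℕ} (N : Fin d → Fin n → ℤ) (y : Fin n → ℝ) : ℝ :=
  ∑ i, lfun N i y * Real.log (lfun N i y)

/-- Second partial derivatives (Hessian matrix) of a function on `Fin n → ℝ`. -/
def hess {n : ℕ} (f : (Fin n → ℝ) → ℝ) (x : Fin n → ℝ) : Matrix (Fin n) (Fin n) ℝ :=
  Matrix.of fun p q => fderiv ℝ (fun z => fderiv ℝ f z (Pi.single q 1)) x (Pi.single p 1)

/-!
By the chain rule the Hessian of `∑ i, φ i (⟨y, a i⟩ + b i)` is `Aᵀ D A`, where the `a i` are the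
rows of `A` and `D` is the diagonal matrix of the second derivatives of the `φ i`, which are
`1 / (⟨y, a i⟩ + b i)` when `φ i t = t log t`. The Cauchy–Binet formula applied to `(Aᵀ D) A`
gives the determinant. To prove Cauchy–Binet, expand `det (A * B)` multilinearly over all maps `f`
from rows to the summation index: only injective `f` contribute, and each of those is uniquely a
strictly increasing tuple precomposed with a permutation.
-/

open Matrix Topology

section CauchyBinet

variable {R ι : Type*} [CommRing R] {n : ℕ}

theorem det_mul_eq_sum_prod_mul_det_submatrix {m : Type*} [Fintype m] [DecidableEq m] [Fintype ι]
    (A : Matrix m ι R) (B : Matrix ι m R) :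
    (A * B).det = ∑ f : m → ι, (∏ p, A p (f p)) * (B.submatrix f id).det := by
  classical
  have rows : A * B = fun p => ∑ i, A p i • B i := by
    ext p q
    simp [mul_apply]
  calc (A * B).det = detRowAlternating fun p => ∑ i, A p i • B i := by rw [rows]; rfl
    _ = ∑ f : m → ι, detRowAlternating fun p => A p (f p) • B (f p) :=
      detRowAlternating.toMultilinearMap.map_sum fun p i => A p i • B i
    _ = ∑ f : m → ι, (∏ p, A p (f p)) * (B.submatrix f id).det :=
      Finset.sum_congr rfl fun f _ =>
        detRowAlternating.toMultilinearMap.map_smul_univ (fun p => A p (f p)) fun p => B (f p)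

theorem sum_perm_prod_mul_det_submatrix {m : Type*} [Fintype m] [DecidableEq m]
    (A : Matrix m ι R) (B : Matrix ι m R) (σ : m → ι) :
    ∑ τ : Equiv.Perm m, (∏ p, A p ((σ ∘ τ) p)) * (B.submatrix (σ ∘ τ) id).det =
      (A.submatrix id σ).det * (B.submatrix σ id).det := by
  rw [← det_transpose (A.submatrix id σ), det_apply', Finset.sum_mul]
  refine Finset.sum_congr rfl fun τ _ => ?_
  have permute_rows : (B.submatrix (σ ∘ τ) id).det = Equiv.Perm.sign τ * (B.submatrix σ id).det :=
    det_permute τ (B.submatrix σ id)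
  simp only [permute_rows, transpose_apply, submatrix_apply, id, Function.comp_apply]
  ring

theorem det_submatrix_eq_zero_of_not_injective {m : Type*} [Fintype m] [DecidableEq m]
    (B : Matrix ι m R) {f : m → ι} (hf : ¬ f.Injective) : (B.submatrix f id).det = 0 := by
  obtain ⟨p, q, hpq, hne⟩ := Function.not_injective_iff.mp hf
  exact det_zero_of_row_eq hne (funext fun k => by simp only [submatrix_apply, hpq])

theorem exists_strictMono_comp_perm_eq [LinearOrder ι] {f : Fin n → ι} (hf : f.Injective) :
    ∃ σ : Fin n → ι, StrictMono σ ∧ ∃ τ : Equiv.Perm (Fin n), σ ∘ τ = f :=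
  ⟨f ∘ Tuple.sort f,
    (Tuple.monotone_sort f).strictMono_of_injective (hf.comp (Tuple.sort f).injective),
    (Tuple.sort f)⁻¹, by ext; simp⟩

theorem strictMono_comp_perm_inj {m : Type*} [LinearOrder m] [WellFoundedLT m] [Preorder ι]
    {σ σ' : m → ι} (hσ : StrictMono σ) (hσ' : StrictMono σ') {τ τ' : Equiv.Perm m} :
    σ ∘ τ = σ' ∘ τ' ↔ σ = σ' ∧ τ = τ' := by
  refine ⟨fun h => ?_, by rintro ⟨rfl, rfl⟩; rfl⟩
  have range_eq : Set.range σ = Set.range σ' := by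
    rw [← τ.surjective.range_comp σ, h, τ'.surjective.range_comp σ']
  obtain rfl := (hσ.range_inj hσ').mp range_eq
  exact ⟨rfl, Equiv.ext fun p => hσ.injective (congrFun h p)⟩

variable [Fintype ι] [LinearOrder ι] [DecidablePred (StrictMono : (Fin n → ι) → Prop)]

theorem sum_eq_sum_strictMono_sum_perm {M : Type*} [AddCommMonoid M] (g : (Fin n → ι) → M)
    (hg : ∀ f, ¬ f.Injective → g f = 0) :
    ∑ f, g f = ∑ σ with StrictMono σ, ∑ τ : Equiv.Perm (Fin n), g (σ ∘ τ) := by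
  rw [← Finset.sum_product']
  refine (Finset.sum_of_injOn (fun x : (Fin n → ι) × Equiv.Perm (Fin n) => x.1 ∘ x.2)
    ?_ (fun _ _ => Finset.mem_coe.mpr (Finset.mem_univ _)) ?_ fun _ _ => rfl).symm
  · rintro ⟨σ, τ⟩ hσ ⟨σ', τ'⟩ hσ' h
    simp only [Finset.coe_product, Set.mem_prod, Finset.mem_coe, Finset.mem_filter_univ] at hσ hσ'
    exact Prod.ext_iff.mpr ((strictMono_comp_perm_inj hσ.1 hσ'.1).mp h)
  · intro f _ hf
    refine hg f fun hinj => hf ?_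
    obtain ⟨σ, hσ, τ, rfl⟩ := exists_strictMono_comp_perm_eq hinj
    exact ⟨(σ, τ), by simpa using hσ, rfl⟩

theorem det_mul_eq_sum_strictMono (A : Matrix (Fin n) ι R) (B : Matrix ι (Fin n) R) :
    (A * B).det =
      ∑ σ : Fin n → ι with StrictMono σ, (A.submatrix id σ).det * (B.submatrix σ id).det := by
  rw [det_mul_eq_sum_prod_mul_det_submatrix, sum_eq_sum_strictMono_sum_perm]
  · exact Finset.sum_congr rfl fun σ _ => sum_perm_prod_mul_det_submatrix A B σ
  · intro f hf
    rw [det_submatrix_eq_zero_of_not_injective B hf, mul_zero]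

theorem det_mul_diagonal_mul_transpose_eq_sum_strictMono (A : Matrix (Fin n) ι R) (c : ι → R) :
    (A * diagonal c * Aᵀ).det =
      ∑ σ : Fin n → ι with StrictMono σ, (A.submatrix id σ).det ^ 2 * ∏ k, c (σ k) := by
  rw [det_mul_eq_sum_strictMono]
  refine Finset.sum_congr rfl fun σ _ => ?_
  have scale_columns :
      (A * diagonal c).submatrix id σ = A.submatrix id σ * diagonal fun k => c (σ k) := by
    ext p k
    simp only [submatrix_apply, mul_diagonal, id]
  rw [scale_columns, det_mul, det_diagonal, ← transpose_submatrix, det_transpose]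
  ring

end CauchyBinet

theorem hasFDerivAt_dotProduct_add_const {m : Type*} [Fintype m] (a : m → ℝ) (b : ℝ) (y : m → ℝ) :
    HasFDerivAt (fun z => z ⬝ᵥ a + b)
      ((dotProductBilin ℝ ℝ).flip a).toContinuousLinearMap y :=
  ((dotProductBilin ℝ ℝ).flip a).toContinuousLinearMap.hasFDerivAt.add_const b

theorem fderiv_sum_comp_dotProduct_add_const_single {m ι : Type*} [Fintype m] [DecidableEq m]
    [Fintype ι] (A : Matrix ι m ℝ) (b : ι → ℝ) {φ : ι → ℝ → ℝ} {φ' : ι → ℝ} {y : m → ℝ}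
    (hφ : ∀ i, HasDerivAt (φ i) (φ' i) (y ⬝ᵥ A i + b i)) (p : m) :
    fderiv ℝ (fun z => ∑ i, φ i (z ⬝ᵥ A i + b i)) y (Pi.single p 1) = ∑ i, φ' i * A i p := by
  have chain_rule : HasFDerivAt (fun z => ∑ i, φ i (z ⬝ᵥ A i + b i))
      (∑ i, φ' i • ((dotProductBilin ℝ ℝ).flip (A i)).toContinuousLinearMap) y :=
    HasFDerivAt.fun_sum fun i _ =>
      (hφ i).comp_hasFDerivAt y (hasFDerivAt_dotProduct_add_const (A i) (b i) y)
  rw [chain_rule.fderiv]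
  simp

theorem hess_sum_comp_dotProduct_add_const {n : ℕ} {ι : Type*} [Fintype ι] [DecidableEq ι]
    (A : Matrix ι (Fin n) ℝ) (b : ι → ℝ) {φ φ' : ι → ℝ → ℝ} {φ'' : ι → ℝ} {y : Fin n → ℝ}
    (hφ : ∀ i, ∀ᶠ t in 𝓝 (y ⬝ᵥ A i + b i), HasDerivAt (φ i) (φ' i t) t)
    (hφ' : ∀ i, HasDerivAt (φ' i) (φ'' i) (y ⬝ᵥ A i + b i)) :
    hess (fun z => ∑ i, φ i (z ⬝ᵥ A i + b i)) y = Aᵀ * diagonal φ'' * A := by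
  ext p q
  have first_derivative :
      (fun z => fderiv ℝ (fun z => ∑ i, φ i (z ⬝ᵥ A i + b i)) z (Pi.single q 1)) =ᶠ[𝓝 y]
        fun z => ∑ i, φ' i (z ⬝ᵥ A i + b i) * A i q := by
    have near_y : ∀ i, ∀ᶠ z in 𝓝 y,
        HasDerivAt (φ i) (φ' i (z ⬝ᵥ A i + b i)) (z ⬝ᵥ A i + b i) := fun i =>
      (hasFDerivAt_dotProduct_add_const (A i) (b i) y).continuousAt.eventually (hφ i)
    filter_upwards [Filter.eventually_all.mpr near_y] with z hz
    exact fderiv_sum_comp_dotProduct_add_const_single A b hz q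
  calc hess (fun z => ∑ i, φ i (z ⬝ᵥ A i + b i)) y p q
      = fderiv ℝ (fun z => ∑ i, φ' i (z ⬝ᵥ A i + b i) * A i q) y (Pi.single p 1) := by
        rw [hess, of_apply, first_derivative.fderiv_eq]
    _ = ∑ i, φ'' i * A i q * A i p :=
        fderiv_sum_comp_dotProduct_add_const_single A b (fun i => (hφ' i).mul_const (A i q)) p
    _ = (Aᵀ * diagonal φ'' * A) p q := by
        simp only [mul_apply (M := Aᵀ * diagonal φ''), mul_diagonal, transpose_apply]
        exact Finset.sum_congr rfl fun i _ => by ring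

/-- The entropy-type potential `∑ i, ℓᵢ log ℓᵢ` of the affine functions `ℓᵢ(y) = ⟨y, aᵢ⟩ + bᵢ`,
where `aᵢ` is the `i`-th row of `A`; up to a factor `1/2` it is Guillemin's symplectic potential of
the polyhedron `{y | ∀ i, 0 ≤ ℓᵢ(y)}`. It generalizes `u0` to real normals and arbitrary constant
terms, and is only meaningful where every `ℓᵢ` is nonnegative. -/
def guilleminPotential {m ι : Type*} [Fintype m] [Fintype ι] (A : Matrix ι m ℝ) (b : ι → ℝ)
    (y : m → ℝ) : ℝ :=
  ∑ i, (y ⬝ᵥ A i + b i) * Real.log (y ⬝ᵥ A i + b i)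

theorem hess_guilleminPotential {n : ℕ} {ι : Type*} [Fintype ι] [DecidableEq ι]
    (A : Matrix ι (Fin n) ℝ) (b : ι → ℝ) {y : Fin n → ℝ} (hy : ∀ i, 0 < y ⬝ᵥ A i + b i) :
    hess (guilleminPotential A b) y = Aᵀ * diagonal (fun i => (y ⬝ᵥ A i + b i)⁻¹) * A := by
  refine hess_sum_comp_dotProduct_add_const A b (φ := fun _ t => t * Real.log t)
    (φ' := fun _ t => Real.log t + 1) (fun i => ?_) fun i => ?_
  · filter_upwards [eventually_ne_nhds (hy i).ne'] with t ht using Real.hasDerivAt_mul_log ht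
  · exact (Real.hasDerivAt_log (hy i).ne').add_const 1

theorem det_hessian_of_u0_general {n : ℕ} {ι : Type*} [Fintype ι] [LinearOrder ι]
    [DecidablePred (StrictMono : (Fin n → ι) → Prop)] (A : Matrix ι (Fin n) ℝ) (b : ι → ℝ)
    {y : Fin n → ℝ} (hy : ∀ i, 0 < y ⬝ᵥ A i + b i) :
    (hess (guilleminPotential A b) y).det =
      ∑ σ : Fin n → ι with StrictMono σ,
        (Aᵀ.submatrix id σ).det ^ 2 / ∏ k, (y ⬝ᵥ A (σ k) + b (σ k)) := by
  have cauchy_binet := det_mul_diagonal_mul_transpose_eq_sum_strictMono Aᵀ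
    fun i => (y ⬝ᵥ A i + b i)⁻¹
  rw [transpose_transpose] at cauchy_binet
  simp only [hess_guilleminPotential A b hy, cauchy_binet, Finset.prod_inv_distrib, div_eq_mul_inv]

theorem continuousLinearMap_add_const_pos_of_eventually_nonneg {E : Type*} [NormedAddCommGroup E]
    [NormedSpace ℝ E] (L : E →L[ℝ] ℝ) {b : ℝ} (hb : b ≠ 0) {y : E}
    (h : ∀ᶠ z in 𝓝 y, 0 ≤ L z + b) : 0 < L y + b := by
  refine h.self_of_nhds.lt_of_ne' fun hzero => hb ?_
  have local_min : IsLocalMin (fun z => L z + b) y := h.mono fun z hz => hzero.trans_le hz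
  have L_eq_zero : L = 0 := local_min.hasFDerivAt_eq_zero (L.hasFDerivAt.add_const b)
  simpa [L_eq_zero] using hzero

theorem lfun_pos_of_mem_interior_Pset {n d : ℕ} {N : Fin d → Fin n → ℤ} {y : Fin n → ℝ}
    (hy : y ∈ interior (Pset N)) (i : Fin d) : 0 < lfun N i y := by
  refine continuousLinearMap_add_const_pos_of_eventually_nonneg
    ((dotProductBilin ℝ ℝ).flip fun j => (N i j : ℝ)).toContinuousLinearMap one_ne_zero ?_
  filter_upwards [mem_interior_iff_mem_nhds.mp hy] with z hz
  exact neg_le_iff_add_nonneg.mp (hz i)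

/-- `det D²u⁰ = ∑_{i₁<⋯<iₙ} det(n⁽ⁱ¹⁾,…,n⁽ⁱⁿ⁾)² / (l_{i₁} ⋯ l_{iₙ})`, the sum running
over strictly increasing `n`-tuples, i.e. over strictly monotone maps `σ : Fin n → Fin d`. -/
theorem det_hessian_of_u0 {n d : ℕ} (hn : 1 ≤ n) (N : Fin d → Fin n → ℤ)
    (hQ : (0 : Fin n → ℝ) ∈ interior (convexHull ℝ (Set.range fun i => fun j => (N i j : ℝ)))) :
    ∀ y ∈ interior (Pset N),
      (hess (u0 N) y).det =
        ∑ σ ∈ Finset.univ.filter (fun σ : Fin n → Fin d => ∀ i j : Fin n, i < j → σ i < σ j),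
          (Matrix.det (Matrix.of fun p k => (N (σ k) p : ℝ))) ^ 2 / ∏ k, lfun N (σ k) y := by
  -- `u0 N` is by definition the potential of the real matrix `N` with constant terms `1`.
  exact fun _ hy => det_hessian_of_u0_general (Matrix.of fun i j => (N i j : ℝ)) 1
    (lfun_pos_of_mem_interior_Pset hy)
end
end

section
/- The function u⁰ is smooth and strictly convex on the interior P° of P; in fact its Hessian D²u⁰(y) is a positive definite matrix at every y ∈ P°. -/
noncomputable section

/-!
`u⁰` is the negative entropy `x ↦ ∑ᵢ xᵢ log xᵢ` of the positive orthant of `ℝᵈ`, pulled back along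
the affine map `l = (l₁, …, l_d)`. The negative entropy is smooth and strictly convex with Hessian
`diag(1 / xᵢ)`, so for injective `l` with matrix `A` the pullback is smooth and strictly convex with
positive definite Hessian `Aᵀ diag(1 / lᵢ) A`. Since `Q` has nonempty interior, the rows `n⁽ⁱ⁾` of
`A` span `ℝⁿ`, which makes `l` injective. Finally `l 0 = (1, …, 1)` lies in the open orthant, so
`P°` is exactly the preimage of the open orthant.
-/

section StrictConvexity

theorem strictConvexOn_comp_affineMap_of_injective {𝕜 E F β : Type*} [Ring 𝕜] [PartialOrder 𝕜]
    [AddCommGroup E] [AddCommGroup F] [AddCommMonoid β] [PartialOrder β] [Module 𝕜 E]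
    [Module 𝕜 F] [SMul 𝕜 β] {f : F → β} {s : Set F} (hf : StrictConvexOn 𝕜 s f)
    (g : E →ᵃ[𝕜] F) (hg : Function.Injective g) : StrictConvexOn 𝕜 (g ⁻¹' s) (f ∘ g) := by
  refine ⟨hf.1.affine_preimage g, fun x hx y hy hxy a b ha hb hab => ?_⟩
  rw [Function.comp_apply, Convex.combo_affine_apply hab]
  exact hf.2 hx hy (hg.ne hxy) ha hb hab

theorem strictConvexOn_sum_apply {ι 𝕜 β : Type*} {E : ι → Type*} [Fintype ι] [Semiring 𝕜]
    [PartialOrder 𝕜] [∀ i, AddCommMonoid (E i)] [∀ i, Module 𝕜 (E i)] [AddCommMonoid β]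
    [PartialOrder β] [IsOrderedCancelAddMonoid β] [Module 𝕜 β] {s : ∀ i, Set (E i)}
    {φ : ∀ i, E i → β} (hφ : ∀ i, StrictConvexOn 𝕜 (s i) (φ i)) :
    StrictConvexOn 𝕜 (Set.univ.pi s) fun x => ∑ i, φ i (x i) := by
  refine ⟨convex_pi fun i _ => (hφ i).1, fun x hx y hy hxy a b ha hb hab => ?_⟩
  obtain ⟨k, hk⟩ := Function.ne_iff.mp hxy
  rw [Finset.smul_sum, Finset.smul_sum, ← Finset.sum_add_distrib]
  refine Finset.sum_lt_sum (fun i _ => ?_) ⟨k, Finset.mem_univ k, ?_⟩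
  · exact (hφ i).convexOn.2 (hx i trivial) (hy i trivial) ha.le hb.le hab
  · exact (hφ k).2 (hx k trivial) (hy k trivial) hk ha hb hab

end StrictConvexity

section ConvexInterior

theorem interior_preimage_continuousAffineMap {E F : Type*} [AddCommGroup E] [Module ℝ E]
    [TopologicalSpace E] [IsTopologicalAddGroup E] [ContinuousSMul ℝ E] [AddCommGroup F]
    [Module ℝ F] [TopologicalSpace F] [IsTopologicalAddGroup F] [ContinuousSMul ℝ F] (g : E →ᴬ[ℝ] F)
    {s : Set F} (hs : Convex ℝ s) {x₀ : E} (hx₀ : g x₀ ∈ interior s) :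
    interior (g ⁻¹' s) = g ⁻¹' interior s := by
  refine Set.Subset.antisymm (fun y hy => ?_)
    (preimage_interior_subset_interior_preimage g.continuous)
  -- Prolong the segment from `x₀` to `y` slightly beyond `y`, staying inside `g ⁻¹' s`.
  have hline : ∀ᶠ t : ℝ in nhdsWithin 1 (Set.Ioi 1), AffineMap.lineMap x₀ y t ∈ g ⁻¹' s := by
    have hcont : ContinuousAt (fun t : ℝ => AffineMap.lineMap x₀ y t) 1 :=
      AffineMap.lineMap_continuous.continuousAt
    refine nhdsWithin_le_nhds (hcont.eventually_mem ?_)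
    simpa only [AffineMap.lineMap_apply_one] using mem_interior_iff_mem_nhds.mp hy
  obtain ⟨t, hts, ht : 1 < t⟩ := (hline.and self_mem_nhdsWithin).exists
  have hsegment : y ∈ openSegment ℝ x₀ (AffineMap.lineMap x₀ y t) := by
    have hy_eq : AffineMap.lineMap x₀ (AffineMap.lineMap x₀ y t) t⁻¹ = y := by
      rw [AffineMap.lineMap_lineMap_right, inv_mul_cancel₀ (by positivity),
        AffineMap.lineMap_apply_one]
    rw [openSegment_eq_image_lineMap]
    exact ⟨t⁻¹, ⟨by positivity, inv_lt_one_of_one_lt₀ ht⟩, hy_eq⟩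
  have hgy : g y ∈ openSegment ℝ (g x₀) (g (AffineMap.lineMap x₀ y t)) :=
    image_openSegment ℝ g.toAffineMap x₀ _ ▸ Set.mem_image_of_mem g hsegment
  exact hs.openSegment_interior_self_subset_interior hx₀ hts hgy

theorem span_eq_top_of_nonempty_interior_convexHull {E : Type*} [NormedAddCommGroup E]
    [NormedSpace ℝ E] {s : Set E} (hs : (interior (convexHull ℝ s)).Nonempty) :
    Submodule.span ℝ s = ⊤ := by
  rw [eq_top_iff, ← SetLike.coe_subset_coe, Submodule.top_coe, ← AffineSubspace.top_coe ℝ E E,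
    ← affineSpan_eq_top_of_nonempty_interior hs]
  exact affineSpan_subset_span

end ConvexInterior

theorem mulVec_injective_of_span_range_row_eq_top {m n R : Type*} [Fintype n] [CommSemiring R]
    {A : Matrix m n R} (hA : Submodule.span R (Set.range A.row) = ⊤) :
    Function.Injective A.mulVec := by
  intro v w hvw
  have hdual : dotProductBilin R R v = dotProductBilin R R w := by
    refine LinearMap.ext_on_range hA fun i => ?_
    exact (dotProduct_comm v (A i)).trans ((congrFun hvw i).trans (dotProduct_comm (A i) w))
  exact dotProduct_eq v w fun u => LinearMap.congr_fun hdual u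

section Hessian

theorem fderiv_fderiv_comp_continuousAffineMap {𝕜 E F G : Type*} [NontriviallyNormedField 𝕜]
    [NormedAddCommGroup E] [NormedSpace 𝕜 E] [NormedAddCommGroup F] [NormedSpace 𝕜 F]
    [NormedAddCommGroup G] [NormedSpace 𝕜 G] {f : F → G} (g : E →ᴬ[𝕜] F) {x : E}
    (hf : ContDiffAt 𝕜 2 f (g x)) (v w : E) :
    fderiv 𝕜 (fderiv 𝕜 (f ∘ g)) x v w =
      fderiv 𝕜 (fderiv 𝕜 f) (g x) (g.contLinear v) (g.contLinear w) := by
  have hfirst : fderiv 𝕜 (f ∘ g) =ᶠ[nhds x] fun z => (fderiv 𝕜 f (g z)).comp g.contLinear := by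
    have hdiff : ∀ᶠ y in nhds (g x), DifferentiableAt 𝕜 f y :=
      (hf.eventually (by simp)).mono fun y hy => hy.differentiableAt two_ne_zero
    filter_upwards [g.continuous.continuousAt.eventually hdiff] with z hz
    rw [fderiv_comp z hz g.differentiableAt, g.fderiv]
  have hsecond : HasFDerivAt (fun z => fderiv 𝕜 f (g z))
      ((fderiv 𝕜 (fderiv 𝕜 f) (g x)).comp g.contLinear) x :=
    ((hf.fderiv_right (m := 1) le_rfl).differentiableAt one_ne_zero).hasFDerivAt.comp x
      g.hasFDerivAt
  rw [hfirst.fderiv_eq, (hsecond.clm_comp (hasFDerivAt_const g.contLinear x)).fderiv]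
  simp

variable {m n : ℕ}

theorem hess_eq_toMatrix₂' {f : (Fin n → ℝ) → ℝ} {x : Fin n → ℝ} (hf : ContDiffAt ℝ 2 f x) :
    hess f x = LinearMap.toMatrix₂' ℝ (fderiv ℝ (fderiv ℝ f) x).toLinearMap₁₂ := by
  have hfderiv : DifferentiableAt ℝ (fderiv ℝ f) x :=
    (hf.fderiv_right (m := 1) le_rfl).differentiableAt one_ne_zero
  ext p q
  simp [hess, fderiv_clm_apply hfderiv (differentiableAt_const _)]

theorem hess_comp_continuousAffineMap {f : (Fin m → ℝ) → ℝ}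
    (g : (Fin n → ℝ) →ᴬ[ℝ] (Fin m → ℝ)) {x : Fin n → ℝ} (hf : ContDiffAt ℝ 2 f (g x)) :
    hess (f ∘ g) x = (LinearMap.toMatrix' g.linear).transpose * hess f (g x) *
      LinearMap.toMatrix' g.linear := by
  have hpullback : (fderiv ℝ (fderiv ℝ (f ∘ g)) x).toLinearMap₁₂ =
      (fderiv ℝ (fderiv ℝ f) (g x)).toLinearMap₁₂.compl₁₂ g.linear g.linear :=
    LinearMap.ext₂ (fderiv_fderiv_comp_continuousAffineMap g hf)
  rw [hess_eq_toMatrix₂' hf, hess_eq_toMatrix₂' (hf.comp x g.contDiff.contDiffAt), hpullback,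
    LinearMap.toMatrix₂'_compl₁₂]

theorem hasFDerivAt_comp_apply {ι 𝕜 : Type*} [Finite ι] [NontriviallyNormedField 𝕜] {φ : 𝕜 → 𝕜}
    {φ' : 𝕜} {x : ι → 𝕜} {i : ι} (hφ : HasDerivAt φ φ' (x i)) :
    HasFDerivAt (fun z : ι → 𝕜 => φ (z i))
      (φ' • ContinuousLinearMap.proj (R := 𝕜) (φ := fun _ : ι => 𝕜) i) x :=
  have := Fintype.ofFinite ι
  HasDerivAt.comp_hasFDerivAt (f := fun z : ι → 𝕜 => z i) x hφ (hasFDerivAt_apply i x)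

theorem hess_sum_apply {φ : Fin n → ℝ → ℝ} {x : Fin n → ℝ}
    (hφ : ∀ i, ContDiffAt ℝ 2 (φ i) (x i)) :
    hess (fun z => ∑ i, φ i (z i)) x = Matrix.diagonal fun i => deriv^[2] (φ i) (x i) := by
  have hpartial (q : Fin n) : (fun z => fderiv ℝ (fun z => ∑ i, φ i (z i)) z (Pi.single q 1))
      =ᶠ[nhds x] fun z => deriv (φ q) (z q) := by
    have hdiff : ∀ᶠ z : Fin n → ℝ in nhds x, ∀ i, DifferentiableAt ℝ (φ i) (z i) :=
      Filter.eventually_all.mpr fun i => (continuousAt_apply i x).eventually <|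
        ((hφ i).eventually (by simp)).mono fun t ht => ht.differentiableAt two_ne_zero
    filter_upwards [hdiff] with z hz
    rw [(HasFDerivAt.fun_sum fun i _ => hasFDerivAt_comp_apply (hz i).hasDerivAt).fderiv]
    simp [Pi.single_apply]
  have hderiv (q : Fin n) : DifferentiableAt ℝ (deriv (φ q)) (x q) :=
    (((hφ q).fderiv_right (m := 1) le_rfl).differentiableAt one_ne_zero).clm_apply
      (differentiableAt_const 1)
  ext p q
  rw [hess, Matrix.of_apply, (hpartial q).fderiv_eq,
    (hasFDerivAt_comp_apply (hderiv q).hasDerivAt).fderiv, Matrix.diagonal_apply]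
  rcases eq_or_ne p q with rfl | hpq
  · simp
  · simp [hpq]

end Hessian

section NegEntropy

/-- The open orthant `(0, ∞)ᵈ`, the interior of the natural domain of `negEntropy`. -/
def openOrthant (d : ℕ) : Set (Fin d → ℝ) :=
  {x | ∀ i, 0 < x i}

variable {d : ℕ}

theorem openOrthant_eq_pi : openOrthant d = Set.univ.pi fun _ => Set.Ioi 0 := by
  ext x
  simp only [openOrthant, Set.mem_ofPred_eq, Set.mem_univ_pi, Set.mem_Ioi]

theorem isOpen_openOrthant : IsOpen (openOrthant d) :=
  openOrthant_eq_pi ▸ isOpen_set_pi Set.finite_univ fun _ _ => isOpen_Ioi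

theorem interior_Ici_zero_eq_openOrthant :
    interior (Set.Ici (0 : Fin d → ℝ)) = openOrthant d := by
  simp only [← Set.pi_univ_Ici, interior_pi_set Set.finite_univ, interior_Ici, openOrthant_eq_pi,
    Pi.zero_apply]

/-- The negative entropy `x ↦ ∑ᵢ xᵢ log xᵢ` of a vector with nonnegative entries. -/
def negEntropy (x : Fin d → ℝ) : ℝ :=
  ∑ i, x i * Real.log (x i)

theorem contDiffOn_negEntropy {k : WithTop ℕ∞} :
    ContDiffOn ℝ k (negEntropy (d := d)) (openOrthant d) := by
  refine ContDiffOn.sum fun i _ => ?_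
  have hi : ContDiffOn ℝ k (fun x : Fin d → ℝ => x i) (openOrthant d) :=
    (contDiff_apply ℝ ℝ i).contDiffOn
  exact hi.mul (hi.log fun x hx => (hx i).ne')

theorem strictConvexOn_negEntropy :
    StrictConvexOn ℝ (openOrthant d) (negEntropy (d := d)) :=
  openOrthant_eq_pi ▸ strictConvexOn_sum_apply fun _ =>
    Real.strictConvexOn_mul_log.subset Set.Ioi_subset_Ici_self (convex_Ioi 0)

theorem hess_negEntropy {x : Fin d → ℝ} (hx : ∀ i, x i ≠ 0) :
    hess negEntropy x = Matrix.diagonal fun i => (x i)⁻¹ := by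
  have hmulLog (i : Fin d) : ContDiffAt ℝ 2 (fun t => t * Real.log t) (x i) :=
    contDiffAt_id.mul (contDiffAt_id.log (hx i))
  simpa only [Real.deriv2_mul_log] using! hess_sum_apply hmulLog

theorem posDef_hess_negEntropy {x : Fin d → ℝ} (hx : x ∈ openOrthant d) :
    (hess negEntropy x).PosDef := by
  rw [hess_negEntropy fun i => (hx i).ne']
  exact Matrix.PosDef.diagonal fun i => inv_pos.mpr (hx i)

end NegEntropy

theorem u0_smooth_strictConvex_general {n d : ℕ} (l : (Fin n → ℝ) →ᴬ[ℝ] (Fin d → ℝ))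
    (hl : Function.Injective l) :
    ContDiffOn ℝ (⊤ : ℕ∞) (negEntropy ∘ l) (l ⁻¹' openOrthant d) ∧
    StrictConvexOn ℝ (l ⁻¹' openOrthant d) (negEntropy ∘ l) ∧
    ∀ y ∈ l ⁻¹' openOrthant d, (hess (negEntropy ∘ l) y).PosDef := by
  refine ⟨contDiffOn_negEntropy.comp l.contDiff.contDiffOn fun _ hy => hy,
    strictConvexOn_comp_affineMap_of_injective strictConvexOn_negEntropy l.toAffineMap hl,
    fun y hy => ?_⟩
  have hsmooth : ContDiffAt ℝ 2 negEntropy (l y) :=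
    contDiffOn_negEntropy.contDiffAt (isOpen_openOrthant.mem_nhds hy)
  have hlinear : Function.Injective (LinearMap.toMatrix' l.linear).mulVec := by
    rw [← Matrix.coe_mulVecLin, ← Matrix.toLin'_apply', Matrix.toLin'_toMatrix']
    exact l.toAffineMap.linear_injective_iff.mpr hl
  rw [hess_comp_continuousAffineMap l hsmooth]
  exact (posDef_hess_negEntropy hy).conjTranspose_mul_mul_same hlinear

section LfunMap

variable {n d : ℕ} (N : Fin d → Fin n → ℤ)

/-- The affine map `l = (l₁, …, l_d) : ℝⁿ → ℝᵈ` whose coordinates are the functions `lfun N i`. -/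
def lfunMap : (Fin n → ℝ) →ᴬ[ℝ] (Fin d → ℝ) :=
  (Matrix.mulVecLin ((Matrix.of N).map Int.cast)).toContinuousLinearMap.toContinuousAffineMap +
    ContinuousAffineMap.const ℝ (Fin n → ℝ) 1

theorem lfunMap_apply (y : Fin n → ℝ) (i : Fin d) : lfunMap N y i = lfun N i y := by
  simp [lfunMap, lfun, Matrix.mulVec, dotProduct, mul_comm]

theorem u0_eq_negEntropy_comp_lfunMap : u0 N = negEntropy ∘ lfunMap N := by
  ext y
  simp only [u0, negEntropy, Function.comp_apply, lfunMap_apply]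

theorem Pset_eq_preimage_lfunMap : Pset N = lfunMap N ⁻¹' Set.Ici 0 := by
  ext y
  simp [Pset, Pi.le_def, lfunMap_apply, lfun, neg_le_iff_add_nonneg]

theorem interior_Pset : interior (Pset N) = lfunMap N ⁻¹' openOrthant d := by
  have hzero : lfunMap N 0 ∈ interior (Set.Ici 0) := by
    simp [interior_Ici_zero_eq_openOrthant, openOrthant, lfunMap_apply, lfun]
  rw [Pset_eq_preimage_lfunMap, interior_preimage_continuousAffineMap _ (convex_Ici 0) hzero,
    interior_Ici_zero_eq_openOrthant]

theorem lfunMap_injective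
    (hN : Submodule.span ℝ (Set.range fun i j => (N i j : ℝ)) = ⊤) :
    Function.Injective (lfunMap N) :=
  (add_left_injective _).comp (mulVec_injective_of_span_range_row_eq_top hN)

end LfunMap

/-- `u⁰` is smooth and strictly convex on `P°`, with positive definite Hessian everywhere
on `P°`. -/
theorem u0_smooth_strictConvex {n d : ℕ} (hn : 1 ≤ n) (N : Fin d → Fin n → ℤ)
    (hQ : (0 : Fin n → ℝ) ∈ interior (convexHull ℝ (Set.range fun i => fun j => (N i j : ℝ)))) :
    ContDiffOn ℝ (⊤ : ℕ∞) (u0 N) (interior (Pset N)) ∧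
    StrictConvexOn ℝ (interior (Pset N)) (u0 N) ∧
    ∀ y ∈ interior (Pset N), (hess (u0 N) y).PosDef := by
  rw [u0_eq_negEntropy_comp_lfunMap, interior_Pset]
  exact u0_smooth_strictConvex_general _
    (lfunMap_injective N (span_eq_top_of_nonempty_interior_convexHull ⟨0, hQ⟩))
end
end

section
/- Let v : ℝⁿ → ℝ be the support function of P, i.e. v(x) := max_{1 ≤ k ≤ m} ⟨x, p⁽ᵏ⁾⟩ where p⁽¹⁾,…,p⁽ᵐ⁾ are the vertices of P (equivalently v(x) = sup_{y ∈ P} ⟨x, y⟩). Then there exists a constant C > 0 such that |φ⁰(x) − v(x)| ≤ C for all x ∈ ℝⁿ. -/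
noncomputable section

/-- The Legendre transform `φ⁰(x) = sup_{y ∈ P°} (⟨x,y⟩ - u⁰(y))`. -/
def phi0 {n d : ℕ} (N : Fin d → Fin n → ℤ) (x : Fin n → ℝ) : ℝ :=
  sSup ((fun y => dotp x y - u0 N y) '' interior (Pset N))

/-!
The functions `⟨x, ·⟩ - u⁰` and `⟨x, ·⟩` differ by `u⁰`, whatever `x` is. Since `t log t` extends
continuously to `t = 0`, `u⁰` is continuous on all of `P`, and `P` is compact, so `u⁰` is bounded
on `P` and the two suprema over `P°` differ by a bounded amount. Finally `P` is the closure of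
`P°`, so passing from `P°` to `P` does not change the supremum of `⟨x, ·⟩`.
-/

open Set

section Suprema

theorem sSup_image_le_sSup_image_add {α : Type*} {s : Set α} {f g : α → ℝ} {C : ℝ}
    (hs : s.Nonempty) (hg : BddAbove (g '' s)) (hfg : ∀ y ∈ s, f y ≤ g y + C) :
    sSup (f '' s) ≤ sSup (g '' s) + C := by
  refine csSup_le (hs.image f) (forall_mem_image.2 fun y hy => (hfg y hy).trans ?_)
  gcongr
  exact le_csSup hg (mem_image_of_mem g hy)

theorem abs_sSup_image_sub_sSup_image_le {α : Type*} {s : Set α} {f g : α → ℝ} {C : ℝ}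
    (hs : s.Nonempty) (hg : BddAbove (g '' s)) (hfg : ∀ y ∈ s, |f y - g y| ≤ C) :
    |sSup (f '' s) - sSup (g '' s)| ≤ C := by
  have f_le (y : α) (hy : y ∈ s) : f y ≤ g y + C := by
    linarith [(abs_sub_le_iff.1 (hfg y hy)).1]
  have g_le (y : α) (hy : y ∈ s) : g y ≤ f y + C := by
    linarith [(abs_sub_le_iff.1 (hfg y hy)).2]
  have hf : BddAbove (f '' s) := by
    obtain ⟨B, hB⟩ := hg
    refine ⟨B + C, forall_mem_image.2 fun y hy => (f_le y hy).trans ?_⟩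
    gcongr
    exact hB (mem_image_of_mem g hy)
  rw [abs_sub_le_iff, sub_le_iff_le_add', sub_le_iff_le_add']
  exact ⟨sSup_image_le_sSup_image_add hs hg f_le, sSup_image_le_sSup_image_add hs hf g_le⟩

variable {X : Type*} [TopologicalSpace X] {s : Set X}

theorem csSup_image_closure {α : Type*} [ConditionallyCompleteLattice α] [TopologicalSpace α]
    [ClosedIicTopology α] {f : X → α} (hs : s.Nonempty) (hf : ContinuousOn f (closure s))
    (hbdd : BddAbove (f '' s)) :
    sSup (f '' closure s) = sSup (f '' s) :=
  ((isLUB_iff_of_subset_of_subset_closure (image_mono subset_closure) hf.image_closure).1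
    (isLUB_csSup (hs.image f) hbdd)).csSup_eq (hs.closure.image f)

theorem exists_abs_sSup_image_sub_sub_sSup_image_closure_le {u : X → ℝ} (hs : s.Nonempty)
    (hsc : IsCompact (closure s)) (hu : ContinuousOn u (closure s)) :
    ∃ C > 0, ∀ f : X → ℝ, ContinuousOn f (closure s) →
      |sSup ((fun y => f y - u y) '' s) - sSup (f '' closure s)| ≤ C := by
  obtain ⟨M, hM⟩ := hsc.exists_bound_of_continuousOn hu
  refine ⟨max M 1, lt_max_of_lt_right one_pos, fun f hf => ?_⟩
  have hbdd : BddAbove (f '' s) := (hsc.bddAbove_image hf).mono (image_mono subset_closure)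
  rw [csSup_image_closure hs hf hbdd]
  refine abs_sSup_image_sub_sSup_image_le hs hbdd fun y hy => le_max_of_le_left ?_
  simpa using hM y (subset_closure hy)

end Suprema

section OneSidedPolar

variable {ι : Type*} [Fintype ι] {S : Set (ι → ℝ)}

/-- The one-sided polar `{y : ⟨y, a⟩ ≥ -1 for all a ∈ S}` of a set `S ⊆ ℝ^ι`, of which the polytope
`P` is an instance. With this sign convention it is the reflection through the origin of the usual
polar `{y : ⟨y, a⟩ ≤ 1 for all a ∈ S}`. -/
def oneSidedPolar (S : Set (ι → ℝ)) : Set (ι → ℝ) :=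
  {y | ∀ a ∈ S, -1 ≤ y ⬝ᵥ a}

theorem oneSidedPolar_eq_biInter (S : Set (ι → ℝ)) :
    oneSidedPolar S = ⋂ a ∈ S, {y | -1 ≤ y ⬝ᵥ a} := by
  ext y
  simp [oneSidedPolar]

theorem isClosed_oneSidedPolar (S : Set (ι → ℝ)) : IsClosed (oneSidedPolar S) := by
  rw [oneSidedPolar_eq_biInter]
  exact isClosed_biInter fun a _ =>
    isClosed_le continuous_const (continuous_id.dotProduct continuous_const)

theorem convex_oneSidedPolar (S : Set (ι → ℝ)) : Convex ℝ (oneSidedPolar S) := by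
  rw [oneSidedPolar_eq_biInter]
  exact convex_iInter₂ fun a _ =>
    convex_halfSpace_ge ⟨fun y z => add_dotProduct y z a, fun c y => smul_dotProduct c y a⟩ _

theorem oneSidedPolar_convexHull (S : Set (ι → ℝ)) :
    oneSidedPolar (convexHull ℝ S) = oneSidedPolar S := by
  refine Subset.antisymm (fun y hy a ha => hy a (subset_convexHull ℝ S ha)) fun y hy => ?_
  have convex_halfSpace : Convex ℝ {a | -1 ≤ y ⬝ᵥ a} :=
    convex_halfSpace_ge ⟨dotProduct_add y, fun c a => dotProduct_smul c y a⟩ _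
  exact convexHull_min hy convex_halfSpace

theorem oneSidedPolar_subset_closedBall_inv {r : ℝ} (hr : 0 < r)
    (hS : Metric.closedBall 0 r ⊆ S) :
    oneSidedPolar S ⊆ Metric.closedBall 0 r⁻¹ := by
  classical
  intro y hy
  rw [mem_closedBall_zero_iff, pi_norm_le_iff_of_nonneg (inv_nonneg.2 hr.le)]
  intro j
  have neg_one_le_mul (c : ℝ) (hc : |c| ≤ r) : -1 ≤ y j * c := by
    simpa only [dotProduct_single] using
      hy (Pi.single j c) (hS (by simpa [Pi.norm_single] using hc))
  have at_pos : -1 ≤ y j * r := neg_one_le_mul r (abs_of_pos hr).le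
  have at_neg : -1 ≤ y j * -r := neg_one_le_mul (-r) (by rw [abs_neg, abs_of_pos hr])
  have abs_mul_le : |y j * r| ≤ 1 := abs_le.2 ⟨at_pos, by linarith⟩
  rwa [abs_mul, abs_of_pos hr, ← le_div_iff₀ hr, one_div] at abs_mul_le

theorem isBounded_oneSidedPolar (hS : 0 ∈ interior (convexHull ℝ S)) :
    Bornology.IsBounded (oneSidedPolar S) := by
  obtain ⟨r, hr, hball⟩ :=
    Metric.nhds_basis_closedBall.mem_iff.1 (mem_interior_iff_mem_nhds.1 hS)
  rw [← oneSidedPolar_convexHull]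
  exact Metric.isBounded_closedBall.subset (oneSidedPolar_subset_closedBall_inv hr hball)

theorem isCompact_oneSidedPolar (hS : 0 ∈ interior (convexHull ℝ S)) :
    IsCompact (oneSidedPolar S) :=
  Metric.isCompact_of_isClosed_isBounded (isClosed_oneSidedPolar S) (isBounded_oneSidedPolar hS)

theorem zero_mem_interior_oneSidedPolar (hS : IsCompact S) :
    0 ∈ interior (oneSidedPolar S) := by
  rw [mem_interior_iff_mem_nhds]
  refine hS.eventually_forall_of_forall_eventually fun a _ => ?_
  have dotProduct_continuous : Continuous fun z : (ι → ℝ) × (ι → ℝ) => z.1 ⬝ᵥ z.2 :=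
    continuous_fst.dotProduct continuous_snd
  exact dotProduct_continuous.continuousAt.eventually_const_le (by simp)

theorem closure_interior_oneSidedPolar (hS : IsCompact S) :
    closure (interior (oneSidedPolar S)) = oneSidedPolar S := by
  rw [(convex_oneSidedPolar S).closure_interior_eq_closure_of_nonempty_interior
    ⟨0, zero_mem_interior_oneSidedPolar hS⟩, (isClosed_oneSidedPolar S).closure_eq]

end OneSidedPolar

section Polytope

variable {n d : ℕ}

theorem Pset_eq_oneSidedPolar (N : Fin d → Fin n → ℤ) :
    Pset N = oneSidedPolar (range fun i => fun j => (N i j : ℝ)) := by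
  ext y
  simp [Pset, oneSidedPolar, dotProduct]

theorem continuous_dotp (x : Fin n → ℝ) : Continuous (dotp x) :=
  continuous_const.dotProduct continuous_id

theorem continuous_u0 (N : Fin d → Fin n → ℤ) : Continuous (u0 N) := by
  have continuous_lfun (i : Fin d) : Continuous (lfun N i) := by
    unfold lfun
    fun_prop
  exact continuous_finsetSum _ fun i _ => Real.continuous_mul_log.comp (continuous_lfun i)

end Polytope

/-- `|φ⁰ - v| ≤ C` on `ℝⁿ`, where `v(x) = sup_{y ∈ P} ⟨x,y⟩` is the support function
of `P` (Lemma 2.5). -/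
theorem phi0_close_to_support_function {n d : ℕ} (hn : 1 ≤ n) (N : Fin d → Fin n → ℤ)
    (hQ : (0 : Fin n → ℝ) ∈ interior (convexHull ℝ (Set.range fun i => fun j => (N i j : ℝ)))) :
    ∃ C > 0, ∀ x : Fin n → ℝ,
      |phi0 N x - sSup ((fun y => dotp x y) '' Pset N)| ≤ C := by
  have hrange : IsCompact (range fun i => fun j => (N i j : ℝ)) := (finite_range _).isCompact
  have nonempty_interior : (interior (Pset N)).Nonempty := by
    rw [Pset_eq_oneSidedPolar]
    exact ⟨0, zero_mem_interior_oneSidedPolar hrange⟩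
  have closure_interior : closure (interior (Pset N)) = Pset N := by
    rw [Pset_eq_oneSidedPolar, closure_interior_oneSidedPolar hrange]
  have isCompact_closure : IsCompact (closure (interior (Pset N))) := by
    rw [closure_interior, Pset_eq_oneSidedPolar]
    exact isCompact_oneSidedPolar hQ
  obtain ⟨C, hC, hbound⟩ := exists_abs_sSup_image_sub_sub_sSup_image_closure_le
    nonempty_interior isCompact_closure (continuous_u0 N).continuousOn
  rw [closure_interior] at hbound
  exact ⟨C, hC, fun x => hbound (dotp x) (continuous_dotp x).continuousOn⟩
end
end

section
/- The function F : ℝⁿ → ℝ defined by F(s) := ∫_P e^{⟨s,y⟩} dy is strictly convex and proper, i.e. F(s) → ∞ as |s| → ∞. -/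
open MeasureTheory

noncomputable section

/-!
Strict convexity is inherited from `exp`: for `s ≠ t` the exponents `⟨s, y⟩` and `⟨t, y⟩` differ on
a nonempty open part of `P`, which has positive measure.

For properness, `exp x ≥ max x 0` bounds `F s` below by `G s = ∫_P max ⟨s, y⟩ 0 dy`. This `G` is
convex, hence continuous, and positively homogeneous. It is positive for `s ≠ 0` because `⟨s, ·⟩`
takes positive values on an open subset of `P`, the origin being interior. Compactness of the unit
sphere then gives `G s ≥ c ‖s‖` with `c > 0`.
-/

open Filter Set Topology

theorem integral_lt_integral_of_frequently_lt {α : Type*} [MeasurableSpace α] {ν : Measure α}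
    {f g : α → ℝ} (hf : Integrable f ν) (hg : Integrable g ν) (hle : f ≤ᵐ[ν] g)
    (hlt : ∃ᵐ y ∂ν, f y < g y) : ∫ y, f y ∂ν < ∫ y, g y ∂ν := by
  refine (integral_mono_ae hf hg hle).lt_of_ne fun heq => hlt ?_
  filter_upwards [(integral_eq_iff_of_ae_le hf hg hle).1 heq] with y hy using hy.not_lt

theorem convexOn_integral {α V : Type*} [MeasurableSpace α] {ν : Measure α} [AddCommGroup V]
    [Module ℝ V] {C : Set V} {f : V → α → ℝ} (hC : Convex ℝ C)
    (hf : ∀ᵐ y ∂ν, ConvexOn ℝ C fun s => f s y) (hint : ∀ s ∈ C, Integrable (f s) ν) :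
    ConvexOn ℝ C fun s => ∫ y, f s y ∂ν := by
  refine ⟨hC, fun s hs t ht a b ha hb hab => ?_⟩
  have hints := (hint s hs).const_mul a
  have hintt := (hint t ht).const_mul b
  calc ∫ y, f (a • s + b • t) y ∂ν
      ≤ ∫ y, a * f s y + b * f t y ∂ν := by
        refine integral_mono_ae (hint _ (hC hs ht ha hb hab)) (hints.add hintt) ?_
        filter_upwards [hf] with y hy using hy.2 hs ht ha hb hab
    _ = a • ∫ y, f s y ∂ν + b • ∫ y, f t y ∂ν := by
        rw [integral_add hints hintt, integral_const_mul, integral_const_mul, smul_eq_mul,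
          smul_eq_mul]

theorem exists_pos_forall_mul_norm_le {V : Type*} [NormedAddCommGroup V] [NormedSpace ℝ V]
    [FiniteDimensional ℝ V] {f : V → ℝ} (hf : Continuous f)
    (hsmul : ∀ r : ℝ, 0 ≤ r → ∀ s, f (r • s) = r * f s) (hpos : ∀ s ≠ 0, 0 < f s) :
    ∃ c > 0, ∀ s, c * ‖s‖ ≤ f s := by
  obtain ⟨c, hc, hcf⟩ : ∃ c, 0 < c ∧ ∀ u ∈ Metric.sphere (0 : V) 1, c ≤ f u :=
    (isCompact_sphere 0 1).exists_forall_le' hf.continuousOn fun u hu =>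
      hpos u (ne_zero_of_mem_unit_sphere ⟨u, hu⟩)
  refine ⟨c, hc, fun s => ?_⟩
  rcases eq_or_ne s 0 with rfl | hs
  · simpa using (hsmul 0 le_rfl 0).ge
  · have hunit : ‖s‖⁻¹ • s ∈ Metric.sphere (0 : V) 1 := by
      simpa using norm_smul_inv_norm (𝕜 := ℝ) hs
    calc c * ‖s‖ ≤ f (‖s‖⁻¹ • s) * ‖s‖ := by gcongr; exact hcf _ hunit
      _ = f s := by
        rw [mul_comm, ← hsmul _ (norm_nonneg s), smul_inv_smul₀ (norm_ne_zero_iff.2 hs)]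

section ExponentialIntegral

variable {α V : Type*} [MeasurableSpace α] {ν : Measure α}

theorem strictConvexOn_integral_exp [AddCommGroup V] [Module ℝ V] {L : V →ₗ[ℝ] α → ℝ}
    (hint : ∀ s, Integrable (fun y => Real.exp (L s y)) ν)
    (hL : ∀ s ≠ 0, ∃ᵐ y ∂ν, L s y ≠ 0) :
    StrictConvexOn ℝ univ fun s => ∫ y, Real.exp (L s y) ∂ν := by
  refine ⟨convex_univ, fun s _ t _ hst a b ha hb hab => ?_⟩
  have hcomb (y : α) : L (a • s + b • t) y = a • L s y + b • L t y := by
    simp only [map_add, map_smul, Pi.add_apply, Pi.smul_apply]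
  have hints := (hint s).const_mul a
  have hintt := (hint t).const_mul b
  calc ∫ y, Real.exp (L (a • s + b • t) y) ∂ν
      < ∫ y, a * Real.exp (L s y) + b * Real.exp (L t y) ∂ν := by
        refine integral_lt_integral_of_frequently_lt (hint _) (hints.add hintt)
          (.of_forall fun y => ?_) ((hL (s - t) (sub_ne_zero.2 hst)).mono fun y hy => ?_)
        · simp only [hcomb]
          exact convexOn_exp.2 (mem_univ _) (mem_univ _) ha.le hb.le hab
        · have hne : L s y ≠ L t y := by simpa [sub_eq_zero] using hy
          rw [hcomb]
          exact strictConvexOn_exp.2 (mem_univ _) (mem_univ _) hne ha hb hab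
    _ = a • ∫ y, Real.exp (L s y) ∂ν + b • ∫ y, Real.exp (L t y) ∂ν := by
        rw [integral_add hints hintt, integral_const_mul, integral_const_mul, smul_eq_mul,
          smul_eq_mul]

theorem max_zero_le_exp (x : ℝ) : max x 0 ≤ Real.exp x :=
  max_le ((lt_add_one x).le.trans (Real.add_one_le_exp x)) (Real.exp_pos x).le

theorem integrable_max_zero_of_integrable_exp {f : α → ℝ}
    (hf : Integrable (fun y => Real.exp (f y)) ν) : Integrable (fun y => max (f y) 0) ν := by
  have hmeas : AEMeasurable f ν := Real.aemeasurable_of_aemeasurable_exp hf.aemeasurable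
  refine hf.mono' (hmeas.max aemeasurable_const).aestronglyMeasurable (.of_forall fun y => ?_)
  rw [Real.norm_of_nonneg (le_max_right _ _)]
  exact max_zero_le_exp _

theorem convexOn_integral_max_zero [AddCommGroup V] [Module ℝ V] {L : V →ₗ[ℝ] α → ℝ}
    (hint : ∀ s, Integrable (fun y => max (L s y) 0) ν) :
    ConvexOn ℝ univ fun s => ∫ y, max (L s y) 0 ∂ν :=
  convexOn_integral convex_univ
    (.of_forall fun y => (((LinearMap.proj y).comp L).convexOn convex_univ).sup
      (convexOn_const 0 convex_univ))
    fun s _ => hint s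

variable [NormedAddCommGroup V] [NormedSpace ℝ V] [FiniteDimensional ℝ V] {L : V →ₗ[ℝ] α → ℝ}

theorem exists_pos_forall_mul_norm_le_integral_max_zero
    (hint : ∀ s, Integrable (fun y => max (L s y) 0) ν)
    (hL : ∀ s ≠ 0, ∃ᵐ y ∂ν, 0 < L s y) :
    ∃ c > 0, ∀ s, c * ‖s‖ ≤ ∫ y, max (L s y) 0 ∂ν := by
  refine exists_pos_forall_mul_norm_le
    (convexOn_integral_max_zero hint).locallyLipschitz.continuous (fun r hr s => ?_)
    fun s hs => ?_
  · simp only [map_smul, Pi.smul_apply, smul_eq_mul, ← integral_const_mul,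
      mul_max_of_nonneg _ _ hr, mul_zero]
  · calc 0 = ∫ _, (0 : ℝ) ∂ν := (integral_zero α ℝ).symm
      _ < ∫ y, max (L s y) 0 ∂ν :=
        integral_lt_integral_of_frequently_lt (integrable_zero α ℝ ν) (hint s)
          (.of_forall fun y => le_max_right _ _)
          ((hL s hs).mono fun y hy => lt_max_of_lt_left hy)

theorem tendsto_integral_exp_cocompact_atTop
    (hint : ∀ s, Integrable (fun y => Real.exp (L s y)) ν)
    (hL : ∀ s ≠ 0, ∃ᵐ y ∂ν, 0 < L s y) :
    Tendsto (fun s => ∫ y, Real.exp (L s y) ∂ν) (cocompact V) atTop := by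
  have hmax (s : V) := integrable_max_zero_of_integrable_exp (hint s)
  obtain ⟨c, hc, hlower⟩ := exists_pos_forall_mul_norm_le_integral_max_zero hmax hL
  exact tendsto_atTop_mono
    (fun s => (hlower s).trans (integral_mono (hmax s) (hint s) fun y => max_zero_le_exp _))
    ((tendsto_norm_cocompact_atTop (E := V)).const_mul_atTop hc)

end ExponentialIntegral

section Pairing

variable {E : Type*} [AddCommGroup E] [Module ℝ E] [TopologicalSpace E] [ContinuousAdd E]
  [ContinuousSMul ℝ E] [MeasurableSpace E] {μ : Measure E} [μ.IsOpenPosMeasure] {P : Set E}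

theorem frequently_ae_restrict_pos (h0 : (0 : E) ∈ interior P) {l : StrongDual ℝ E} (hl : l ≠ 0) :
    ∃ᵐ y ∂μ.restrict P, 0 < l y := by
  have himage : l '' interior P ∈ 𝓝 (0 : ℝ) := by
    simpa only [map_zero] using
      (l.isOpenMap_of_ne_zero hl).image_mem_nhds (isOpen_interior.mem_nhds h0)
  obtain ⟨_, hpos, y, hyP, rfl⟩ : (Ioi (0 : ℝ) ∩ l '' interior P).Nonempty :=
    nonempty_of_mem (inter_mem_nhdsWithin _ himage)
  have hopen : IsOpen ({y | 0 < l y} ∩ interior P) :=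
    (isOpen_lt continuous_const l.continuous).inter isOpen_interior
  refine frequently_ae_iff.2 (ne_of_gt ?_)
  calc 0 < μ ({y | 0 < l y} ∩ interior P) := hopen.measure_pos μ ⟨y, hpos, hyP⟩
    _ ≤ μ ({y | 0 < l y} ∩ P) := measure_mono (inter_subset_inter_right _ interior_subset)
    _ ≤ μ.restrict P {y | 0 < l y} := Measure.le_restrict_apply _ _

theorem F_strictConvex_proper_general [T2Space E] [OpensMeasurableSpace E]
    [IsFiniteMeasureOnCompacts μ] {V : Type*} [NormedAddCommGroup V] [NormedSpace ℝ V]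
    [FiniteDimensional ℝ V] {B : V →ₗ[ℝ] StrongDual ℝ E} (hB : Function.Injective B)
    (hP : IsCompact P) (h0 : (0 : E) ∈ interior P) :
    StrictConvexOn ℝ univ (fun s => ∫ y in P, Real.exp (B s y) ∂μ) ∧
    Tendsto (fun s => ∫ y in P, Real.exp (B s y) ∂μ) (cocompact V) atTop := by
  let L : V →ₗ[ℝ] E → ℝ := LinearMap.ltoFun ℝ E ℝ ℝ ∘ₗ ContinuousLinearMap.coeLM ℝ ∘ₗ B
  have hint (s : V) : IntegrableOn (fun y => Real.exp (L s y)) P μ :=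
    (Real.continuous_exp.comp (B s).continuous).continuousOn.integrableOn_compact hP
  have hpos (s : V) (hs : s ≠ 0) : ∃ᵐ y ∂μ.restrict P, 0 < L s y :=
    frequently_ae_restrict_pos h0 ((map_ne_zero_iff B hB).2 hs)
  exact ⟨strictConvexOn_integral_exp hint fun s hs => (hpos s hs).mono fun y hy => hy.ne',
    tendsto_integral_exp_cocompact_atTop hint hpos⟩

end Pairing

/-- The identification of `ℝⁿ` with its dual by the dot product, which turns `F` into a function on
continuous functionals; `dotpDual n s y` unfolds to `dotp s y`. -/
def dotpDual (n : ℕ) : (Fin n → ℝ) ≃ₗ[ℝ] StrongDual ℝ (Fin n → ℝ) :=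
  dotProductEquiv ℝ (Fin n) ≪≫ₗ LinearMap.toContinuousLinearMap

/-- `F(s) = ∫_P e^{⟨s,y⟩} dy` is strictly convex and proper (`F(s) → ∞` as `|s| → ∞`),
where `P` is a compact convex polytope with the origin in its interior. -/
theorem F_strictConvex_proper {n : ℕ} (V : Finset (Fin n → ℝ)) (P : Set (Fin n → ℝ))
    (hP : P = convexHull ℝ (V : Set (Fin n → ℝ)))
    (h0 : (0 : Fin n → ℝ) ∈ interior P) :
    StrictConvexOn ℝ Set.univ (fun s : Fin n → ℝ => ∫ y in P, Real.exp (dotp s y)) ∧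
    Filter.Tendsto (fun s : Fin n → ℝ => ∫ y in P, Real.exp (dotp s y))
      (Filter.cocompact (Fin n → ℝ)) Filter.atTop :=
  F_strictConvex_proper_general (B := (dotpDual n).toLinearMap) (dotpDual n).injective
    (hP ▸ V.finite_toSet.isCompact_convexHull ℝ) h0
end
end

section
/- Fix ε₀ ∈ (0,1]. There exists a constant C > 0, depending only on n, the vectors n⁽ⁱ⁾ (equivalently on P), c, c₀ and ε₀, such that for every t ∈ [ε₀,1] and every solution φ of the continuity-method equation at parameter t, the infimum m_t := inf_{x ∈ ℝⁿ} w_t(x) of w_t := tφ + (1−t)φ⁰ satisfies |m_t| ≤ C. -/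
open MeasureTheory

noncomputable section

/-- The gradient of a function on `Fin n → ℝ`. -/
def grad {n : ℕ} (f : (Fin n → ℝ) → ℝ) (x : Fin n → ℝ) : Fin n → ℝ :=
  fun p => fderiv ℝ f x (Pi.single p 1)

/-- The Euclidean norm of `x ∈ ℝⁿ`. -/
def eucNorm {n : ℕ} (x : Fin n → ℝ) : ℝ := Real.sqrt (∑ j, x j ^ 2)

/-- The function `w_t = tφ + (1-t)φ⁰`. -/
def wfun {n d : ℕ} (N : Fin d → Fin n → ℤ) (t : ℝ) (φ : (Fin n → ℝ) → ℝ)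
    (x : Fin n → ℝ) : ℝ :=
  t * φ x + (1 - t) * phi0 N x

/-- A solution of the continuity-method equation at parameter `t`: a smooth strictly
convex `φ : ℝⁿ → ℝ` whose gradient map is a diffeomorphism from `ℝⁿ` onto `P°`,
satisfying `det D²φ = exp(-c₀ - w_t - ⟨c, Dφ⟩)` with `w_t = tφ + (1-t)φ⁰`. -/
def IsSolution {n d : ℕ} (N : Fin d → Fin n → ℤ) (c : Fin n → ℝ) (c₀ t : ℝ)
    (φ : (Fin n → ℝ) → ℝ) : Prop :=
  ContDiff ℝ (⊤ : ℕ∞) φ ∧ StrictConvexOn ℝ Set.univ φ ∧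
  Set.BijOn (grad φ) Set.univ (interior (Pset N)) ∧
  ContDiffOn ℝ (⊤ : ℕ∞) (Function.invFun (grad φ)) (interior (Pset N)) ∧
  ∀ x, (hess φ x).det = Real.exp (-c₀ - wfun N t φ x - dotp c (grad φ x))

/-!
Let `w` be Lipschitz and `det D²φ` be comparable to `exp (-w)`. Since `∇φ` is a bijection from `ℝⁿ`
onto `Ω`, integration shows that `∫ exp (-w)` is comparable to `|Ω|`. If the minimum `m = w x₀` were
very negative, the Lipschitz bound would give `exp (-w)` too much mass near `x₀`; this bounds `m`
from below.

For the upper bound, `A = {w ≤ m + 1}` is a convex body, so up to dimensional constants it is a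
parallelepiped `z + M [-1, 1]ⁿ`. Convexity of `w` forces linear growth off `A`, so `|Ω|` is at most
a constant times `exp (-m) |det M|`. Since `w - ε φ` is convex, `φ` differs from its tangent at `z`
by at most `2 / ε` on `A`; hence `Mᵀ` maps the `∇φ`-image of the half-size box into a cube of
bounded size. That image has volume about `exp (-m) |det M|`, so `exp (-m) |det M|²` is bounded.
Eliminating `det M` leaves a bound on `exp m`.
-/

open Filter Topology Metric
open scoped NNReal

/-! ### Convex functions -/

section

variable {E : Type*} [NormedAddCommGroup E] [NormedSpace ℝ E] {f : E → ℝ}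

lemma add_fderiv_sub_le_of_convexOn (hconv : ConvexOn ℝ Set.univ f) (hf : Differentiable ℝ f)
    (x z : E) : f x + fderiv ℝ f x (z - x) ≤ f z := by
  have hline : ConvexOn ℝ Set.univ (f ∘ AffineMap.lineMap x z : ℝ → ℝ) :=
    hconv.comp_affineMap (AffineMap.lineMap x z)
  have hderiv : HasDerivAt (f ∘ AffineMap.lineMap x z : ℝ → ℝ) (fderiv ℝ f x (z - x)) 0 := by
    refine HasFDerivAt.comp_hasDerivAt (0 : ℝ) ?_ AffineMap.hasDerivAt_lineMap
    simpa using (hf x).hasFDerivAt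
  have hslope := hline.le_slope_of_hasDerivAt (Set.mem_univ 0) (Set.mem_univ 1) one_pos hderiv
  simp only [slope_def_field, Function.comp_apply, AffineMap.lineMap_apply_one,
    AffineMap.lineMap_apply_zero, sub_zero, div_one] at hslope
  linarith

lemma fderiv_sub_fderiv_apply_le (hconv : ConvexOn ℝ Set.univ f) (hf : Differentiable ℝ f)
    (x z k : E) :
    (fderiv ℝ f x - fderiv ℝ f z) k ≤ f (x + k) - f z - fderiv ℝ f z (x + k - z) := by
  have hx := add_fderiv_sub_le_of_convexOn hconv hf x (x + k)
  have hz := add_fderiv_sub_le_of_convexOn hconv hf z x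
  rw [add_sub_cancel_left] at hx
  have hsplit : fderiv ℝ f z (x + k - z) = fderiv ℝ f z (x - z) + fderiv ℝ f z k := by
    rw [← map_add]; congr 1; abel
  rw [sub_apply]
  linarith

lemma two_mul_le_add_of_convexOn {g : E → ℝ} (hg : ConvexOn ℝ Set.univ g) (z k : E) :
    2 * g z ≤ g (z + k) + g (z - k) := by
  have h := hg.2 (Set.mem_univ (z + k)) (Set.mem_univ (z - k)) one_half_pos.le one_half_pos.le
    (add_halves (1 : ℝ))
  have hmid : (1 / 2 : ℝ) • (z + k) + (1 / 2 : ℝ) • (z - k) = z := by module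
  rw [hmid] at h
  simp only [smul_eq_mul] at h
  linarith

lemma mul_fderiv_gap_le {w : E → ℝ} {ε : ℝ} (hε : 0 ≤ ε) (hconv : ConvexOn ℝ Set.univ f)
    (hf : Differentiable ℝ f) (hw : ConvexOn ℝ Set.univ (w - ε • f)) (z k : E) :
    ε * (f (z + k) - f z - fderiv ℝ f z k) ≤ w (z + k) + w (z - k) - 2 * w z := by
  have htangent := add_fderiv_sub_le_of_convexOn hconv hf z (z - k)
  rw [sub_sub_cancel_left, map_neg] at htangent
  have hmid := two_mul_le_add_of_convexOn hw z k
  simp only [Pi.sub_apply, Pi.smul_apply, smul_eq_mul] at hmid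
  have := mul_le_mul_of_nonneg_left htangent hε
  linarith

lemma norm_sub_le_of_sublevel_subset {w : E → ℝ} {x₀ : E} {ρ : ℝ} (hw : ConvexOn ℝ Set.univ w)
    (hmin : ∀ x, w x₀ ≤ w x) (hρ : ∀ x, w x ≤ w x₀ + 1 → ‖x - x₀‖ ≤ ρ) (x : E) :
    ‖x - x₀‖ ≤ ρ * (w x - w x₀ + 1) := by
  have hρ₀ : 0 ≤ ρ := by simpa using hρ x₀ (by linarith)
  rcases le_or_gt (w x) (w x₀ + 1) with hx | hx
  · exact (hρ x hx).trans (le_mul_of_one_le_right hρ₀ (by linarith [hmin x]))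
  · set s := w x - w x₀ with hs
    have hs₁ : 1 < s := by linarith
    have hs₀ : 0 < s := by linarith
    have hy : w (AffineMap.lineMap x₀ x s⁻¹) ≤ w x₀ + 1 := by
      have h := hw.2 (Set.mem_univ x₀) (Set.mem_univ x)
        (sub_nonneg.2 (inv_le_one_of_one_le₀ hs₁.le)) (inv_nonneg.2 hs₀.le) (by ring)
      calc w (AffineMap.lineMap x₀ x s⁻¹) = w ((1 - s⁻¹) • x₀ + s⁻¹ • x) := by
            rw [AffineMap.lineMap_apply_module]
        _ ≤ (1 - s⁻¹) * w x₀ + s⁻¹ * w x := h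
        _ = w x₀ + s⁻¹ * s := by rw [hs]; ring
        _ = w x₀ + 1 := by rw [inv_mul_cancel₀ hs₀.ne']
    have hnorm : s⁻¹ * ‖x - x₀‖ ≤ ρ := by
      simpa [AffineMap.lineMap_apply, norm_smul, abs_of_pos hs₀] using hρ _ hy
    rw [inv_mul_le_iff₀ hs₀] at hnorm
    linarith

end

/-! ### Integrability of `exp (-w)` and coercivity -/

section

variable {E : Type*} [NormedAddCommGroup E] [NormedSpace ℝ E] [FiniteDimensional ℝ E]
  [MeasurableSpace E] [BorelSpace E] {μ : Measure E}

lemma integrable_exp_neg_mul_norm [μ.IsAddHaarMeasure] {a : ℝ} (ha : 0 < a) :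
    Integrable (fun x ↦ Real.exp (-a * ‖x‖)) μ := by
  set r : ℝ := Module.finrank ℝ E + 1
  have hnorm : Tendsto (fun x : E ↦ 1 + ‖x‖) (cocompact E) atTop :=
    tendsto_atTop_add_const_left _ _ tendsto_norm_cocompact_atTop
  have hO : (fun x : E ↦ Real.exp (-a * ‖x‖)) =O[cocompact E] fun x ↦ (1 + ‖x‖) ^ (-r) := by
    have h := ((isLittleO_exp_neg_mul_rpow_atTop ha (-r)).comp_tendsto hnorm).isBigO.const_mul_left
      (Real.exp a)
    refine h.congr_left fun x ↦ ?_
    rw [Function.comp_apply, ← Real.exp_add]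
    congr 1
    ring
  exact (Continuous.locallyIntegrable (by fun_prop)).integrable_of_isBigO_cocompact hO
    ((integrable_one_add_norm (lt_add_one _)).integrableAtFilter _)

lemma tendsto_setIntegral_closedBall_cocompact {f : E → ℝ} (hf : Integrable f μ) (r : ℝ) :
    Tendsto (fun x ↦ ∫ y in closedBall x r, f y ∂μ) (cocompact E) (𝓝 0) := by
  have : (cocompact E).IsCountablyGenerated := by
    rw [← cobounded_eq_cocompact, ← comap_norm_atTop]
    infer_instance
  simp_rw [← integral_indicator measurableSet_closedBall]
  rw [← integral_zero E ℝ (μ := μ)]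
  refine tendsto_integral_filter_of_dominated_convergence (fun y ↦ ‖f y‖)
    (.of_forall fun x ↦ (hf.indicator measurableSet_closedBall).aestronglyMeasurable)
    (.of_forall fun x ↦ .of_forall fun y ↦ norm_indicator_le_norm_self _ _) hf.norm
    (.of_forall fun y ↦ tendsto_const_nhds.congr' ?_)
  filter_upwards [(isCompact_closedBall y r).compl_mem_cocompact] with x hx
  rw [Set.indicator_of_notMem (by rwa [mem_closedBall_comm])]

variable {L : ℝ≥0} {w : E → ℝ}

lemma exp_neg_sub_mul_le_setIntegral_closedBall [IsFiniteMeasureOnCompacts μ]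
    (hL : LipschitzWith L w) (hw : Integrable (fun x ↦ Real.exp (-w x)) μ) (x : E) :
    Real.exp (-w x - L) * μ.real (closedBall x 1) ≤
      ∫ y in closedBall x 1, Real.exp (-w y) ∂μ := by
  rw [mul_comm, ← smul_eq_mul, ← setIntegral_const]
  refine setIntegral_mono_on (integrableOn_const measure_closedBall_lt_top.ne) hw.integrableOn
    measurableSet_closedBall fun y hy ↦ Real.exp_le_exp.2 ?_
  have hdist : (L : ℝ) * dist y x ≤ L * 1 := by gcongr; exact hy
  linarith [hL.le_add_mul y x]

lemma tendsto_cocompact_atTop_of_integrable_exp_neg [μ.IsAddHaarMeasure]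
    (hL : LipschitzWith L w) (hw : Integrable (fun x ↦ Real.exp (-w x)) μ) :
    Tendsto w (cocompact E) atTop := by
  set v := Real.exp (-L) * μ.real (closedBall (0 : E) 1)
  have hv : 0 < v := mul_pos (Real.exp_pos _)
    (ENNReal.toReal_pos (measure_closedBall_pos μ 0 one_pos).ne' measure_closedBall_lt_top.ne)
  have hbound (x : E) : Real.exp (-w x) ≤ v⁻¹ * ∫ y in closedBall x 1, Real.exp (-w y) ∂μ := by
    rw [le_inv_mul_iff₀ hv]
    have h := exp_neg_sub_mul_le_setIntegral_closedBall hL hw x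
    rw [measureReal_def, Measure.addHaar_closedBall_center, ← measureReal_def, sub_eq_add_neg,
      Real.exp_add] at h
    linarith
  have hlim := (tendsto_setIntegral_closedBall_cocompact hw 1).const_mul v⁻¹
  rw [mul_zero] at hlim
  rw [← tendsto_neg_atBot_iff, ← Real.tendsto_exp_comp_nhds_zero]
  exact squeeze_zero (fun _ ↦ (Real.exp_pos _).le) hbound hlim

end

lemma isCompact_setOf_le_of_tendsto_cocompact {X : Type*} [TopologicalSpace X] {w : X → ℝ}
    (hw : Continuous w) (hlim : Tendsto w (cocompact X) atTop) (a : ℝ) :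
    IsCompact {x | w x ≤ a} := by
  obtain ⟨s, hs, hsub⟩ := mem_cocompact'.1 (hlim.eventually_gt_atTop a)
  refine hs.of_isClosed_subset (isClosed_le hw continuous_const) fun x hx ↦ hsub ?_
  simpa using hx

open Matrix

/-! ### Parallelepipeds in convex bodies -/

section

variable {n : ℕ}

lemma add_mulVec_mem_of_convex {ι : Type*} [Fintype ι] {A : Set (Fin n → ℝ)} (hA : Convex ℝ A)
    {v : Fin n → ℝ} (hv : v ∈ A) {M : Matrix (Fin n) ι ℝ} (hM : ∀ i, v + M.col i ∈ A) {s : ι → ℝ}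
    (hs : ∀ i, 0 ≤ s i) (hsum : ∑ i, s i ≤ 1) : v + M *ᵥ s ∈ A := by
  have h := hA.sum_mem (t := Finset.univ) (w := fun o : Option ι ↦ o.elim (1 - ∑ i, s i) s)
    (z := fun o ↦ o.elim v fun i ↦ v + M.col i)
    (by rintro (_ | i) -; exacts [sub_nonneg.2 hsum, hs i]) (by simp [Fintype.sum_option])
    (by rintro (_ | i) -; exacts [hv, hM i])
  convert! h using 1
  simp only [Fintype.sum_option, Option.elim, smul_add, Finset.sum_add_distrib, ← Finset.sum_smul,
    mulVec_eq_sum, op_smul_eq_smul]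
  rw [← add_assoc, ← add_smul, sub_add_cancel, one_smul]
  rfl

lemma isCompact_setOf_forall_add_col_mem {A : Set (Fin n → ℝ)} (hA : IsCompact A) :
    IsCompact {p : (Fin n → ℝ) × Matrix (Fin n) (Fin n) ℝ |
      p.1 ∈ A ∧ ∀ i, p.1 + p.2.col i ∈ A} := by
  let edges (q : (Fin n → ℝ) × (Fin n → Fin n → ℝ)) : (Fin n → ℝ) × Matrix (Fin n) (Fin n) ℝ :=
    (q.1, of fun j i ↦ q.2 i j - q.1 j)
  have hcont : Continuous edges :=
    continuous_fst.prodMk (continuous_matrix fun j i ↦ by simp only [of_apply]; fun_prop)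
  convert! (hA.prod (isCompact_univ_pi fun _ : Fin n ↦ hA)).image hcont using 1
  ext ⟨v, M⟩
  constructor
  · rintro ⟨hv, hM⟩
    refine ⟨(v, fun i ↦ v + M.col i), ⟨hv, fun i _ ↦ hM i⟩, Prod.ext rfl ?_⟩
    ext j i
    simp [edges]
  · rintro ⟨⟨x, u⟩, ⟨hx, hu⟩, h⟩
    obtain ⟨rfl, rfl⟩ := Prod.ext_iff.1 h
    refine ⟨hx, fun i ↦ ?_⟩
    convert! hu i trivial using 1
    ext j
    simp [edges]

lemma exists_det_ne_zero_forall_add_col_mem {A : Set (Fin n → ℝ)} (hne : (interior A).Nonempty) :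
    ∃ v ∈ A, ∃ M : Matrix (Fin n) (Fin n) ℝ, M.det ≠ 0 ∧ ∀ i, v + M.col i ∈ A := by
  obtain ⟨v, hv⟩ := hne
  obtain ⟨δ, hδ, hball⟩ := nhds_basis_closedBall.mem_iff.1 (mem_interior_iff_mem_nhds.1 hv)
  refine ⟨v, interior_subset hv, diagonal fun _ ↦ δ, ?_, fun i ↦ hball ?_⟩
  · simp [hδ.ne']
  · have hcol : (diagonal fun _ : Fin n ↦ δ).col i = Pi.single i δ := by
      ext j
      simp [diagonal_apply, Pi.single_apply]
    simp [hcol, Pi.norm_single, abs_of_pos hδ]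

-- The simplex of maximal volume with vertices in `A` plays the role of the John ellipsoid.
lemma exists_forall_abs_det_le {A : Set (Fin n → ℝ)} (hA : IsCompact A)
    (hne : (interior A).Nonempty) :
    ∃ v ∈ A, ∃ M : Matrix (Fin n) (Fin n) ℝ, M.det ≠ 0 ∧ (∀ i, v + M.col i ∈ A) ∧
      ∀ M' : Matrix (Fin n) (Fin n) ℝ, (∀ i, v + M'.col i ∈ A) → |M'.det| ≤ |M.det| := by
  obtain ⟨v₀, hv₀, M₀, hdet₀, hM₀⟩ := exists_det_ne_zero_forall_add_col_mem hne
  have hcont : Continuous fun p : (Fin n → ℝ) × Matrix (Fin n) (Fin n) ℝ ↦ |p.2.det| :=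
    continuous_snd.matrix_det.abs
  obtain ⟨⟨v, M⟩, ⟨hv, hM⟩, hmax⟩ := (isCompact_setOf_forall_add_col_mem hA).exists_isMaxOn
    ⟨(v₀, M₀), hv₀, hM₀⟩ hcont.continuousOn
  refine ⟨v, hv, M, abs_pos.1 ?_, hM, fun M' hM' ↦ ?_⟩
  · exact (abs_pos.2 hdet₀).trans_le (isMaxOn_iff.1 hmax (v₀, M₀) ⟨hv₀, hM₀⟩)
  · exact isMaxOn_iff.1 hmax (v, M') ⟨hv, hM'⟩

lemma det_updateCol_mulVec {ι R : Type*} [Fintype ι] [DecidableEq ι] [CommRing R]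
    (M : Matrix ι ι R) (i : ι) (s : ι → R) :
    (M.updateCol i (M *ᵥ s)).det = s i * M.det := by
  convert! det_updateCol_sum M i s using 3
  ext j
  simp [mulVec, dotProduct, mul_comm]

lemma norm_le_one_of_forall_abs_det_le {A : Set (Fin n → ℝ)} {v : Fin n → ℝ}
    {M : Matrix (Fin n) (Fin n) ℝ} (hdet : M.det ≠ 0) (hM : ∀ i, v + M.col i ∈ A)
    (hmax : ∀ M' : Matrix (Fin n) (Fin n) ℝ, (∀ i, v + M'.col i ∈ A) → |M'.det| ≤ |M.det|)
    {s : Fin n → ℝ} (hs : v + M *ᵥ s ∈ A) : ‖s‖ ≤ 1 := by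
  refine (pi_norm_le_iff_of_nonneg zero_le_one).2 fun i ↦ ?_
  have hswap := hmax (M.updateCol i (M *ᵥ s)) fun j ↦ by
    rcases eq_or_ne j i with rfl | hj
    · convert! hs
      ext k
      simp
    · convert! hM j using 2
      ext k
      simp [hj]
  rw [det_updateCol_mulVec, abs_mul] at hswap
  exact le_of_mul_le_mul_right (by rwa [one_mul]) (abs_pos.2 hdet)

lemma exists_mulVec_box {A : Set (Fin n → ℝ)} (hA : IsCompact A) (hconv : Convex ℝ A)
    (hne : (interior A).Nonempty) :
    ∃ (z : Fin n → ℝ) (M : Matrix (Fin n) (Fin n) ℝ), M.det ≠ 0 ∧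
      (∀ s, ‖s‖ ≤ (2 * (n + 1) : ℝ)⁻¹ → z + M *ᵥ s ∈ A) ∧
      ∀ x ∈ A, ∀ s, x + M *ᵥ s ∈ A → ‖s‖ ≤ 2 := by
  obtain ⟨v, hv, M, hdet, hM, hmax⟩ := exists_forall_abs_det_le hA hne
  set r : ℝ := (2 * (n + 1) : ℝ)⁻¹ with hr_def
  have hr : n * (2 * r) ≤ 1 := by
    rw [hr_def]
    field_simp
    linarith
  refine ⟨v + M *ᵥ fun _ ↦ r, M, hdet, fun s hs ↦ ?_, fun x hx s hxs ↦ ?_⟩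
  · have hsi (i : Fin n) := abs_le.1 ((norm_le_pi_norm s i).trans hs)
    rw [add_assoc, ← mulVec_add]
    refine add_mulVec_mem_of_convex hconv hv hM (fun i ↦ ?_) ?_
    · simpa [add_comm] using neg_le_iff_add_nonneg.1 (hsi i).1
    · calc ∑ i, ((fun _ ↦ r : Fin n → ℝ) + s) i ≤ ∑ _i : Fin n, 2 * r :=
            Finset.sum_le_sum fun i _ ↦ by simpa [two_mul] using (hsi i).2
        _ ≤ 1 := by simpa using hr
  · have hax : v + M *ᵥ (M⁻¹ *ᵥ (x - v)) = x := by
      rw [mulVec_mulVec, mul_nonsing_inv _ hdet.isUnit, one_mulVec, add_sub_cancel]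
    set a := M⁻¹ *ᵥ (x - v)
    have ha : ‖a‖ ≤ 1 := norm_le_one_of_forall_abs_det_le hdet hM hmax (by rwa [hax])
    have has : ‖a + s‖ ≤ 1 := norm_le_one_of_forall_abs_det_le hdet hM hmax
      (by rwa [mulVec_add, ← add_assoc, hax])
    calc ‖s‖ = ‖a + s - a‖ := by rw [add_sub_cancel_left]
      _ ≤ ‖a + s‖ + ‖a‖ := norm_sub_le _ _
      _ ≤ 2 := by linarith

lemma integral_eq_abs_det_mul_integral_mulVec {M : Matrix (Fin n) (Fin n) ℝ} (hM : M.det ≠ 0)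
    (x₀ : Fin n → ℝ) (f : (Fin n → ℝ) → ℝ) :
    ∫ x, f x = |M.det| * ∫ y, f (x₀ + M *ᵥ y) := by
  have hderiv (y : Fin n → ℝ) : HasFDerivAt (fun y ↦ x₀ + M *ᵥ y)
      (LinearMap.toContinuousLinearMap (toLin' M)) y :=
    (LinearMap.toContinuousLinearMap (toLin' M)).hasFDerivAt.const_add x₀
  have hunit : IsUnit M := M.isUnit_iff_isUnit_det.2 hM.isUnit
  have hinj : Function.Injective fun y ↦ x₀ + M *ᵥ y :=
    (add_right_injective x₀).comp (mulVec_injective_iff_isUnit.2 hunit)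
  have hsurj : Function.Surjective fun y ↦ x₀ + M *ᵥ y :=
    (add_left_surjective x₀).comp (mulVec_surjective_iff_isUnit.2 hunit)
  have h := integral_image_eq_integral_abs_det_fderiv_smul volume MeasurableSet.univ
    (fun y _ ↦ (hderiv y).hasFDerivWithinAt) hinj.injOn f
  simpa [Set.image_univ, hsurj.range_eq, integral_const_mul, ContinuousLinearMap.det] using h

end

/-! ### Gradient images -/

section

variable {n : ℕ} {f : (Fin n → ℝ) → ℝ}

lemma fderiv_apply_eq_dotProduct_grad (x v : Fin n → ℝ) : fderiv ℝ f x v = grad f x ⬝ᵥ v := by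
  conv_lhs => rw [pi_eq_sum_univ' v, map_sum]
  simp [grad, dotProduct, mul_comm]

lemma hasFDerivAt_grad (hf : ContDiff ℝ 2 f) (x : Fin n → ℝ) :
    HasFDerivAt (grad f) (LinearMap.toContinuousLinearMap (toLin' (hess f x)ᵀ)) x := by
  refine hasFDerivAt_pi'.2 fun q ↦ ?_
  have hd : Differentiable ℝ fun z ↦ fderiv ℝ f z (Pi.single q 1) :=
    ((hf.fderiv_right (m := 1) le_rfl).differentiable one_ne_zero).clm_apply
      (differentiable_const _)
  convert! (hd x).hasFDerivAt using 1
  ext v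
  rw [fderiv_apply_eq_dotProduct_grad]
  rfl

lemma abs_dotProduct_le (x y : Fin n → ℝ) : |x ⬝ᵥ y| ≤ n * ‖x‖ * ‖y‖ := by
  calc |x ⬝ᵥ y| ≤ ∑ i, |x i| * |y i| := by
        simpa only [dotProduct, abs_mul] using
          Finset.abs_sum_le_sum_abs (fun i ↦ x i * y i) Finset.univ
    _ ≤ ∑ _i : Fin n, ‖x‖ * ‖y‖ := by
        gcongr with i
        exacts [norm_le_pi_norm x i, norm_le_pi_norm y i]
    _ = n * ‖x‖ * ‖y‖ := by simp [mul_assoc]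

lemma lipschitzWith_of_norm_grad_le {R : ℝ≥0} (hf : Differentiable ℝ f)
    (hR : ∀ x, ‖grad f x‖ ≤ R) : LipschitzWith (n * R) f := by
  refine lipschitzWith_of_nnnorm_fderiv_le hf fun x ↦ ?_
  refine ContinuousLinearMap.opNorm_le_bound _ (NNReal.coe_nonneg _) fun v ↦ ?_
  rw [fderiv_apply_eq_dotProduct_grad, Real.norm_eq_abs]
  refine (abs_dotProduct_le _ v).trans ?_
  refine mul_le_mul_of_nonneg_right ?_ (norm_nonneg v)
  exact mul_le_mul_of_nonneg_left (hR x) n.cast_nonneg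

end

section

variable {n : ℕ} {f w : (Fin n → ℝ) → ℝ} {M : Matrix (Fin n) (Fin n) ℝ} {z : Fin n → ℝ}
  {ε m r : ℝ}

lemma fderiv_gap_le_of_mulVec_box (hε : 0 < ε) (hconv : ConvexOn ℝ Set.univ f)
    (hf : Differentiable ℝ f) (hw : ConvexOn ℝ Set.univ (w - ε • f)) (hmin : ∀ x, m ≤ w x)
    (hbox : ∀ s, ‖s‖ ≤ r → w (z + M *ᵥ s) ≤ m + 1) {s : Fin n → ℝ} (hs : ‖s‖ ≤ r) :
    f (z + M *ᵥ s) - f z - fderiv ℝ f z (M *ᵥ s) ≤ 2 / ε := by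
  have hgap := mul_fderiv_gap_le hε.le hconv hf hw z (M *ᵥ s)
  have hneg := hbox (-s) (by rwa [norm_neg])
  rw [mulVec_neg, ← sub_eq_add_neg] at hneg
  rw [le_div_iff₀' hε]
  linarith [hbox s hs, hmin z]

lemma norm_transpose_mulVec_grad_sub_le (hε : 0 < ε) (hr : 0 < r)
    (hconv : ConvexOn ℝ Set.univ f) (hf : Differentiable ℝ f)
    (hw : ConvexOn ℝ Set.univ (w - ε • f)) (hmin : ∀ x, m ≤ w x)
    (hbox : ∀ s, ‖s‖ ≤ r → w (z + M *ᵥ s) ≤ m + 1) {s : Fin n → ℝ} (hs : ‖s‖ ≤ r / 2) :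
    ‖Mᵀ *ᵥ (grad f (z + M *ᵥ s) - grad f z)‖ ≤ 4 / (ε * r) := by
  set g := Mᵀ *ᵥ (grad f (z + M *ᵥ s) - grad f z) with hg
  have hpair (u : Fin n → ℝ) (hu : ‖u‖ ≤ r / 2) : g ⬝ᵥ u ≤ 2 / ε := by
    have hsu : ‖s + u‖ ≤ r := (norm_add_le s u).trans (by linarith)
    calc g ⬝ᵥ u = (fderiv ℝ f (z + M *ᵥ s) - fderiv ℝ f z) (M *ᵥ u) := by
          rw [hg, mulVec_transpose, ← dotProduct_mulVec, sub_dotProduct, _root_.sub_apply,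
            fderiv_apply_eq_dotProduct_grad, fderiv_apply_eq_dotProduct_grad]
      _ ≤ f (z + M *ᵥ s + M *ᵥ u) - f z - fderiv ℝ f z (z + M *ᵥ s + M *ᵥ u - z) :=
          fderiv_sub_fderiv_apply_le hconv hf _ z _
      _ = f (z + M *ᵥ (s + u)) - f z - fderiv ℝ f z (M *ᵥ (s + u)) := by
          rw [add_assoc, ← mulVec_add, add_sub_cancel_left]
      _ ≤ 2 / ε := fderiv_gap_le_of_mulVec_box hε hconv hf hw hmin hbox hsu
  refine (pi_norm_le_iff_of_nonneg (by positivity)).2 fun i ↦ ?_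
  have hpos := hpair (Pi.single i (r / 2)) (by simp [Pi.norm_single, abs_of_pos hr])
  have hneg := hpair (Pi.single i (-(r / 2))) (by simp [Pi.norm_single, abs_of_pos hr])
  rw [dotProduct_single] at hpos hneg
  have hbound : |g i| * (r / 2) ≤ 2 / ε := by
    rw [← abs_of_pos (half_pos hr), ← abs_mul]
    exact abs_le.2 ⟨by linarith, hpos⟩
  calc ‖g i‖ ≤ 2 / ε / (r / 2) := (le_div_iff₀ (half_pos hr)).2 hbound
    _ = 4 / (ε * r) := by field_simp; norm_num

lemma abs_det_mul_volume_image_le {S : Set (Fin n → ℝ)} {p : Fin n → ℝ} {b : ℝ} (hb : 0 ≤ b)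
    (hS : ∀ q ∈ S, ‖M *ᵥ (q - p)‖ ≤ b) : |M.det| * volume.real S ≤ (2 * b) ^ n := by
  have hsub : toLin' M '' S ⊆ closedBall (M *ᵥ p) b := by
    rintro _ ⟨q, hq, rfl⟩
    rw [mem_closedBall, dist_eq_norm, toLin'_apply, ← mulVec_sub]
    exact hS q hq
  calc |M.det| * volume.real S = volume.real (toLin' M '' S) := by
        rw [measureReal_def, measureReal_def, Measure.addHaar_image_linearMap, LinearMap.det_toLin',
          ENNReal.toReal_mul, ENNReal.toReal_ofReal (abs_nonneg _)]
    _ ≤ volume.real (closedBall (M *ᵥ p) b) :=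
        measureReal_mono hsub measure_closedBall_lt_top.ne
    _ = (2 * b) ^ n := by
        rw [measureReal_def, Real.volume_pi_closedBall _ hb, Fintype.card_fin,
          ENNReal.toReal_ofReal (by positivity)]

lemma volume_real_image_add_mulVec_closedBall (M : Matrix (Fin n) (Fin n) ℝ) (z : Fin n → ℝ)
    (hr : 0 ≤ r) :
    volume.real ((fun s ↦ z + M *ᵥ s) '' closedBall 0 r) = |M.det| * (2 * r) ^ n := by
  have himage : (fun s ↦ z + M *ᵥ s) '' closedBall 0 r =
      (fun x ↦ z + x) '' (toLin' M '' closedBall 0 r) := by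
    rw [Set.image_image]
    rfl
  rw [himage, measureReal_def, Set.image_add_left, measure_preimage_add,
    Measure.addHaar_image_linearMap, LinearMap.det_toLin', Real.volume_pi_closedBall _ hr,
    Fintype.card_fin, ENNReal.toReal_mul, ENNReal.toReal_ofReal (abs_nonneg _),
    ENNReal.toReal_ofReal (by positivity)]

lemma integral_exp_neg_le {x₀ : Fin n → ℝ} {ρ : ℝ} (hρ : 0 < ρ) (hw : ConvexOn ℝ Set.univ w)
    (hmin : ∀ x, w x₀ ≤ w x) (hM : M.det ≠ 0)
    (hbound : ∀ s, w (x₀ + M *ᵥ s) ≤ w x₀ + 1 → ‖s‖ ≤ ρ) :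
    ∫ x, Real.exp (-w x) ≤
      |M.det| * (Real.exp (1 - w x₀) * ∫ y : Fin n → ℝ, Real.exp (-ρ⁻¹ * ‖y‖)) := by
  have hconv : ConvexOn ℝ Set.univ fun y ↦ w (x₀ + M *ᵥ y) :=
    (hw.translate_right x₀).comp_linearMap (toLin' M)
  have hgrowth (y : Fin n → ℝ) : ‖y‖ ≤ ρ * (w (x₀ + M *ᵥ y) - w x₀ + 1) := by
    simpa using norm_sub_le_of_sublevel_subset (x₀ := 0) hconv (fun y ↦ by simpa using hmin _)
      (fun y hy ↦ by simpa using hbound y (by simpa using hy)) y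
  rw [integral_eq_abs_det_mul_integral_mulVec hM x₀]
  refine mul_le_mul_of_nonneg_left ?_ (abs_nonneg _)
  rw [← integral_const_mul]
  refine integral_mono_of_nonneg (.of_forall fun y ↦ (Real.exp_pos _).le)
    ((integrable_exp_neg_mul_norm (inv_pos.2 hρ)).const_mul _) (.of_forall fun y ↦ ?_)
  beta_reduce
  rw [← Real.exp_add]
  have := (inv_mul_le_iff₀ hρ).2 (hgrowth y)
  exact Real.exp_le_exp.2 (by linarith)

end

/-! ### Potentials with prescribed Monge–Ampère density -/

/-- A convex potential `φ` on `ℝⁿ` whose gradient maps `ℝⁿ` bijectively onto `Ω` and whose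
Monge–Ampère density is comparable to `exp (-w)`, in the sense that `|log det D²φ + w| ≤ K`. -/
structure IsMongeAmperePotential {n : ℕ} (Ω : Set (Fin n → ℝ)) (w : (Fin n → ℝ) → ℝ) (K : ℝ)
    (φ : (Fin n → ℝ) → ℝ) : Prop where
  contDiff : ContDiff ℝ 2 φ
  convexOn : ConvexOn ℝ Set.univ φ
  bijOn : Set.BijOn (grad φ) Set.univ Ω
  det_mem : ∀ x, (hess φ x).det ∈ Set.Icc (Real.exp (-w x - K)) (Real.exp (-w x + K))

namespace IsMongeAmperePotential

variable {n : ℕ} {Ω : Set (Fin n → ℝ)} {w φ : (Fin n → ℝ) → ℝ} {K ε : ℝ}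

lemma differentiable (h : IsMongeAmperePotential Ω w K φ) : Differentiable ℝ φ :=
  h.contDiff.differentiable two_ne_zero

lemma abs_det_hess (h : IsMongeAmperePotential Ω w K φ) (x : Fin n → ℝ) :
    |(hess φ x).det| = (hess φ x).det :=
  abs_of_pos ((Real.exp_pos _).trans_le (h.det_mem x).1)

lemma volume_real_image_grad (h : IsMongeAmperePotential Ω w K φ) {s : Set (Fin n → ℝ)}
    (hs : MeasurableSet s) : volume.real (grad φ '' s) = ∫ x in s, (hess φ x).det := by
  have hcov := integral_image_eq_integral_abs_det_fderiv_smul volume hs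
    (fun x _ ↦ (hasFDerivAt_grad h.contDiff x).hasFDerivWithinAt)
    (h.bijOn.injOn.mono s.subset_univ) fun _ ↦ (1 : ℝ)
  simpa [ContinuousLinearMap.det, h.abs_det_hess] using hcov

lemma integrable_det_hess (h : IsMongeAmperePotential Ω w K φ) (hΩ : volume Ω ≠ ⊤) :
    Integrable fun x ↦ (hess φ x).det := by
  have hcov := integrableOn_image_iff_integrableOn_abs_det_fderiv_smul volume MeasurableSet.univ
    (fun x _ ↦ (hasFDerivAt_grad h.contDiff x).hasFDerivWithinAt) h.bijOn.injOn fun _ ↦ (1 : ℝ)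
  rw [h.bijOn.image_eq] at hcov
  simpa [ContinuousLinearMap.det, h.abs_det_hess] using hcov.1 (integrableOn_const hΩ)

lemma exp_neg_le_exp_mul_det (h : IsMongeAmperePotential Ω w K φ) (x : Fin n → ℝ) :
    Real.exp (-w x) ≤ Real.exp K * (hess φ x).det := by
  calc Real.exp (-w x) = Real.exp K * Real.exp (-w x - K) := by rw [← Real.exp_add]; ring_nf
    _ ≤ Real.exp K * (hess φ x).det := by gcongr; exact (h.det_mem x).1

lemma integrable_exp_neg (h : IsMongeAmperePotential Ω w K φ) (hΩ : volume Ω ≠ ⊤)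
    (hw : Continuous w) : Integrable fun x ↦ Real.exp (-w x) := by
  refine ((h.integrable_det_hess hΩ).const_mul (Real.exp K)).mono'
    (by fun_prop) (.of_forall fun x ↦ ?_)
  rw [Real.norm_of_nonneg (Real.exp_pos _).le]
  exact h.exp_neg_le_exp_mul_det x

lemma setIntegral_exp_neg_le (h : IsMongeAmperePotential Ω w K φ) (hΩ : volume Ω ≠ ⊤)
    (hw : Continuous w) {s : Set (Fin n → ℝ)} (hs : MeasurableSet s) :
    ∫ x in s, Real.exp (-w x) ≤ Real.exp K * volume.real (grad φ '' s) := by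
  rw [h.volume_real_image_grad hs, ← integral_const_mul]
  exact setIntegral_mono (h.integrable_exp_neg hΩ hw).integrableOn
    ((h.integrable_det_hess hΩ).const_mul _).integrableOn h.exp_neg_le_exp_mul_det

lemma volume_real_le (h : IsMongeAmperePotential Ω w K φ) (hΩ : volume Ω ≠ ⊤)
    (hw : Continuous w) : volume.real Ω ≤ Real.exp K * ∫ x, Real.exp (-w x) := by
  rw [← h.bijOn.image_eq, h.volume_real_image_grad .univ, setIntegral_univ, ← integral_const_mul]
  refine integral_mono (h.integrable_det_hess hΩ) ((h.integrable_exp_neg hΩ hw).const_mul _)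
    fun x ↦ (h.det_mem x).2.trans_eq ?_
  rw [← Real.exp_add, add_comm]

lemma exp_neg_mul_two_pow_le (h : IsMongeAmperePotential Ω w K φ) (hΩ : volume Ω ≠ ⊤) {L : ℝ≥0}
    (hw : LipschitzWith L w) (x : Fin n → ℝ) :
    Real.exp (-w x - L) * 2 ^ n ≤ Real.exp K * volume.real Ω := by
  have hint := h.integrable_exp_neg hΩ hw.continuous
  calc Real.exp (-w x - L) * 2 ^ n = Real.exp (-w x - L) * volume.real (closedBall x 1) := by
        rw [measureReal_def, Real.volume_pi_closedBall _ zero_le_one]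
        simp
    _ ≤ ∫ y in closedBall x 1, Real.exp (-w y) :=
        exp_neg_sub_mul_le_setIntegral_closedBall hw hint x
    _ ≤ Real.exp K * volume.real (grad φ '' closedBall x 1) :=
        h.setIntegral_exp_neg_le hΩ hw.continuous measurableSet_closedBall
    _ ≤ Real.exp K * volume.real Ω := by
        gcongr
        exact (Set.image_mono (Set.subset_univ _)).trans_eq h.bijOn.image_eq

variable {M : Matrix (Fin n) (Fin n) ℝ} {z : Fin n → ℝ} {m r : ℝ}

lemma exp_neg_mul_volume_real_le (h : IsMongeAmperePotential Ω w K φ) (hΩ : volume Ω ≠ ⊤)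
    (hw : Continuous w) {s : Set (Fin n → ℝ)} (hs : IsCompact s) (hsw : ∀ x ∈ s, w x ≤ m) :
    Real.exp (-m) * volume.real s ≤ Real.exp K * volume.real (grad φ '' s) := by
  refine le_trans ?_ (h.setIntegral_exp_neg_le hΩ hw hs.measurableSet)
  rw [mul_comm, ← smul_eq_mul, ← setIntegral_const]
  exact setIntegral_mono_on (integrableOn_const hs.measure_ne_top)
    (h.integrable_exp_neg hΩ hw).integrableOn hs.measurableSet
    fun x hx ↦ Real.exp_le_exp.2 (neg_le_neg (hsw x hx))

lemma sq_det_mul_pow_le (h : IsMongeAmperePotential Ω w K φ) (hΩ : volume Ω ≠ ⊤)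
    (hw : Continuous w) (hε : 0 < ε) (hwφ : ConvexOn ℝ Set.univ (w - ε • φ))
    (hmin : ∀ x, m ≤ w x) (hr : 0 < r) (hbox : ∀ s, ‖s‖ ≤ r → w (z + M *ᵥ s) ≤ m + 1) :
    |M.det| ^ 2 * r ^ n ≤ Real.exp (m + 1 + K) * (8 / (ε * r)) ^ n := by
  set H := (fun s ↦ z + M *ᵥ s) '' closedBall 0 (r / 2) with hH
  have hcompact : IsCompact H := (isCompact_closedBall _ _).image (by fun_prop)
  have hnorm {s : Fin n → ℝ} (hs : s ∈ closedBall 0 (r / 2)) : ‖s‖ ≤ r / 2 :=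
    mem_closedBall_zero_iff.1 hs
  have hlower : Real.exp (-(m + 1)) * (|M.det| * r ^ n) ≤
      Real.exp K * volume.real (grad φ '' H) := by
    have hvol := volume_real_image_add_mulVec_closedBall M z (half_pos hr).le
    rw [mul_div_cancel₀ r two_ne_zero, ← hH] at hvol
    rw [← hvol]
    refine h.exp_neg_mul_volume_real_le hΩ hw hcompact ?_
    rintro _ ⟨s, hs, rfl⟩
    exact hbox s ((hnorm hs).trans (half_le_self hr.le))
  have hupper : |M.det| * volume.real (grad φ '' H) ≤ (8 / (ε * r)) ^ n := by
    have hgrad : ∀ q ∈ grad φ '' H, ‖Mᵀ *ᵥ (q - grad φ z)‖ ≤ 4 / (ε * r) := by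
      rintro _ ⟨_, ⟨s, hs, rfl⟩, rfl⟩
      exact norm_transpose_mulVec_grad_sub_le hε hr h.convexOn h.differentiable hwφ hmin hbox
        (hnorm hs)
    have hvol := abs_det_mul_volume_image_le (by positivity) hgrad
    rwa [det_transpose, ← mul_div_assoc, show (2 : ℝ) * 4 = 8 by norm_num] at hvol
  calc |M.det| ^ 2 * r ^ n
      = Real.exp (m + 1) * |M.det| * (Real.exp (-(m + 1)) * (|M.det| * r ^ n)) := by
        rw [Real.exp_neg]
        field_simp
    _ ≤ Real.exp (m + 1) * |M.det| * (Real.exp K * volume.real (grad φ '' H)) := by gcongr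
    _ = Real.exp (m + 1 + K) * (|M.det| * volume.real (grad φ '' H)) := by
        rw [Real.exp_add _ K]
        ring
    _ ≤ Real.exp (m + 1 + K) * (8 / (ε * r)) ^ n := by gcongr

lemma tendsto_cocompact_atTop (h : IsMongeAmperePotential Ω w K φ) (hΩ : volume Ω ≠ ⊤) {L : ℝ≥0}
    (hw : LipschitzWith L w) : Tendsto w (cocompact (Fin n → ℝ)) atTop :=
  tendsto_cocompact_atTop_of_integrable_exp_neg hw (h.integrable_exp_neg hΩ hw.continuous)

lemma convexOn_of_convexOn_sub_smul (h : IsMongeAmperePotential Ω w K φ) (hε : 0 ≤ ε)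
    (hwφ : ConvexOn ℝ Set.univ (w - ε • φ)) : ConvexOn ℝ Set.univ w := by
  rw [← sub_add_cancel w (ε • φ)]
  exact hwφ.add (h.convexOn.smul hε)

lemma exp_mul_sq_volume_mul_pow_le_of_mulVec_box (h : IsMongeAmperePotential Ω w K φ)
    (hΩ : volume Ω ≠ ⊤) (hw : Continuous w) (hε : 0 < ε)
    (hwφ : ConvexOn ℝ Set.univ (w - ε • φ)) {x₀ : Fin n → ℝ} (hmin : ∀ x, w x₀ ≤ w x)
    (hdet : M.det ≠ 0) (hr : 0 < r) (hinner : ∀ s, ‖s‖ ≤ r → w (z + M *ᵥ s) ≤ w x₀ + 1)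
    {ρ : ℝ} (hρ : 0 < ρ) (houter : ∀ s, w (x₀ + M *ᵥ s) ≤ w x₀ + 1 → ‖s‖ ≤ ρ) :
    Real.exp (w x₀) * volume.real Ω ^ 2 * r ^ n ≤ Real.exp (3 * (K + 1)) *
      (∫ y : Fin n → ℝ, Real.exp (-ρ⁻¹ * ‖y‖)) ^ 2 * (8 / (ε * r)) ^ n := by
  have hsq := h.sq_det_mul_pow_le hΩ hw hε hwφ hmin hr hinner
  have hint := integral_exp_neg_le hρ (h.convexOn_of_convexOn_sub_smul hε.le hwφ) hmin hdet houter
  set J := ∫ y : Fin n → ℝ, Real.exp (-ρ⁻¹ * ‖y‖)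
  have hvol : volume.real Ω ≤ Real.exp K * (|M.det| * (Real.exp (1 - w x₀) * J)) :=
    (h.volume_real_le hΩ hw).trans (by gcongr)
  calc Real.exp (w x₀) * volume.real Ω ^ 2 * r ^ n
      ≤ Real.exp (w x₀) * (Real.exp K * (|M.det| * (Real.exp (1 - w x₀) * J))) ^ 2 * r ^ n := by
        gcongr
    _ = Real.exp (w x₀) * (Real.exp K * Real.exp (1 - w x₀) * J) ^ 2 * (|M.det| ^ 2 * r ^ n) := by
        ring
    _ ≤ Real.exp (w x₀) * (Real.exp K * Real.exp (1 - w x₀) * J) ^ 2 *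
          (Real.exp (w x₀ + 1 + K) * (8 / (ε * r)) ^ n) := by gcongr
    _ = Real.exp (w x₀ + 2 * (K + (1 - w x₀)) + (w x₀ + 1 + K)) * J ^ 2 * (8 / (ε * r)) ^ n := by
        simp only [two_mul, Real.exp_add]
        ring
    _ = Real.exp (3 * (K + 1)) * J ^ 2 * (8 / (ε * r)) ^ n := by ring_nf

lemma exp_mul_sq_volume_mul_pow_le (h : IsMongeAmperePotential Ω w K φ) (hΩ : volume Ω ≠ ⊤)
    {L : ℝ≥0} (hw : LipschitzWith L w) (hε : 0 < ε) (hwφ : ConvexOn ℝ Set.univ (w - ε • φ))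
    {x₀ : Fin n → ℝ} (hmin : ∀ x, w x₀ ≤ w x) (hr : r = (2 * (n + 1) : ℝ)⁻¹) :
    Real.exp (w x₀) * volume.real Ω ^ 2 * r ^ n ≤ Real.exp (3 * (K + 1)) *
      (∫ y : Fin n → ℝ, Real.exp (-2⁻¹ * ‖y‖)) ^ 2 * (8 / (ε * r)) ^ n := by
  set A := {x | w x ≤ w x₀ + 1}
  have hA : IsCompact A := isCompact_setOf_le_of_tendsto_cocompact hw.continuous
    (h.tendsto_cocompact_atTop hΩ hw) _
  have hconv : Convex ℝ A := by
    simpa using (h.convexOn_of_convexOn_sub_smul hε.le hwφ).convex_le (w x₀ + 1)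
  have hne : (interior A).Nonempty := ⟨x₀, mem_interior_iff_mem_nhds.2 <|
    (hw.continuous.continuousAt.eventually_lt_const (lt_add_one (w x₀))).mono fun _ ↦ le_of_lt⟩
  obtain ⟨z, M, hdet, hinner, houter⟩ := exists_mulVec_box hA hconv hne
  have hx₀ : x₀ ∈ A := (lt_add_one (w x₀)).le
  exact h.exp_mul_sq_volume_mul_pow_le_of_mulVec_box hΩ hw.continuous hε hwφ hmin hdet
    (by rw [hr]; positivity) (by rwa [hr]) two_pos (houter x₀ hx₀)

end IsMongeAmperePotential

theorem inf_w_bounded_general {n : ℕ} {Ω : Set (Fin n → ℝ)} (hΩ₀ : volume Ω ≠ 0)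
    (hΩ : volume Ω ≠ ⊤) (L : ℝ≥0) (K : ℝ) {ε : ℝ} (hε : 0 < ε) :
    ∃ C > 0, ∀ w φ : (Fin n → ℝ) → ℝ, IsMongeAmperePotential Ω w K φ → LipschitzWith L w →
      ConvexOn ℝ Set.univ (w - ε • φ) → |sInf (Set.range w)| ≤ C := by
  set V := volume.real Ω
  have hV : 0 < V := ENNReal.toReal_pos hΩ₀ hΩ
  set r : ℝ := (2 * (n + 1) : ℝ)⁻¹ with hr
  have hr₀ : 0 < r := by positivity
  set a : ℝ := Real.exp (3 * (K + 1)) * (∫ y : Fin n → ℝ, Real.exp (-2⁻¹ * ‖y‖)) ^ 2 *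
    (8 / (ε * r)) ^ n / (V ^ 2 * r ^ n)
  set b : ℝ := Real.exp (K + L) * V / 2 ^ n
  refine ⟨|Real.log a| + |Real.log b| + 1, by positivity, fun w φ h hw hwφ ↦ ?_⟩
  obtain ⟨x₀, hmin⟩ := hw.continuous.exists_forall_le (h.tendsto_cocompact_atTop hΩ hw)
  have hinf : sInf (Set.range w) = w x₀ :=
    IsLeast.csInf_eq ⟨Set.mem_range_self x₀, Set.forall_mem_range.2 hmin⟩
  have hupper : w x₀ ≤ Real.log a := by
    have hexp : Real.exp (w x₀) ≤ a := by
      rw [le_div_iff₀ (mul_pos (pow_pos hV 2) (pow_pos hr₀ n)), ← mul_assoc]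
      exact h.exp_mul_sq_volume_mul_pow_le hΩ hw hε hwφ hmin hr
    simpa using Real.log_le_log (Real.exp_pos _) hexp
  have hlower : -w x₀ ≤ Real.log b := by
    have hexp : Real.exp (-w x₀) ≤ b := by
      have hball := h.exp_neg_mul_two_pow_le hΩ hw x₀
      rw [Real.exp_sub, div_mul_eq_mul_div, div_le_iff₀ (Real.exp_pos _)] at hball
      rw [le_div_iff₀ (by positivity), Real.exp_add]
      linarith
    simpa using Real.log_le_log (Real.exp_pos _) hexp
  rw [hinf, abs_le]
  constructor <;> linarith [le_abs_self (Real.log a), le_abs_self (Real.log b),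
    abs_nonneg (Real.log a), abs_nonneg (Real.log b)]

/-! ### Legendre transforms and the dual polytope -/

section

/-- The Legendre transform of `u` restricted to `Ω`, that is, of the function equal to `u` on `Ω`
and to `+∞` elsewhere. Meaningful only where the supremum is finite. -/
def legendreOn {n : ℕ} (Ω : Set (Fin n → ℝ)) (u : (Fin n → ℝ) → ℝ) (x : Fin n → ℝ) : ℝ :=
  sSup ((fun y ↦ x ⬝ᵥ y - u y) '' Ω)

variable {n : ℕ} {Ω : Set (Fin n → ℝ)} {u : (Fin n → ℝ) → ℝ} {R : ℝ≥0} {b : ℝ}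

lemma sub_le_legendreOn (hR : ∀ y ∈ Ω, ‖y‖ ≤ R) (hb : ∀ y ∈ Ω, b ≤ u y) (x : Fin n → ℝ)
    {y : Fin n → ℝ} (hy : y ∈ Ω) : x ⬝ᵥ y - u y ≤ legendreOn Ω u x := by
  refine le_csSup ⟨n * ‖x‖ * R - b, ?_⟩ (Set.mem_image_of_mem _ hy)
  rintro _ ⟨z, hz, rfl⟩
  have hpair : x ⬝ᵥ z ≤ n * ‖x‖ * R :=
    ((le_abs_self _).trans (abs_dotProduct_le x z)).trans (by gcongr; exact hR z hz)
  exact sub_le_sub hpair (hb z hz)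

lemma convexOn_legendreOn (hne : Ω.Nonempty) (hR : ∀ y ∈ Ω, ‖y‖ ≤ R) (hb : ∀ y ∈ Ω, b ≤ u y) :
    ConvexOn ℝ Set.univ (legendreOn Ω u) := by
  refine ⟨convex_univ, fun x _ z _ p q hp hq hpq ↦ csSup_le (hne.image _) ?_⟩
  rintro _ ⟨y, hy, rfl⟩
  calc (p • x + q • z) ⬝ᵥ y - u y = (p • x + q • z) ⬝ᵥ y - (p + q) * u y := by rw [hpq, one_mul]
    _ = p • (x ⬝ᵥ y - u y) + q • (z ⬝ᵥ y - u y) := by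
        simp only [add_dotProduct, smul_dotProduct, smul_eq_mul]
        ring
    _ ≤ p • legendreOn Ω u x + q • legendreOn Ω u z := by
        gcongr <;> exact sub_le_legendreOn hR hb _ hy

lemma lipschitzWith_legendreOn (hne : Ω.Nonempty) (hR : ∀ y ∈ Ω, ‖y‖ ≤ R)
    (hb : ∀ y ∈ Ω, b ≤ u y) : LipschitzWith (n * R) (legendreOn Ω u) := by
  refine LipschitzWith.of_le_add_mul _ fun x z ↦ csSup_le (hne.image _) ?_
  rintro _ ⟨y, hy, rfl⟩
  have hpair : (x - z) ⬝ᵥ y ≤ (n * R : ℝ≥0) * dist x z := by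
    calc (x - z) ⬝ᵥ y ≤ n * ‖x - z‖ * ‖y‖ := (le_abs_self _).trans (abs_dotProduct_le _ _)
      _ ≤ n * ‖x - z‖ * R := by gcongr; exact hR y hy
      _ = (n * R : ℝ≥0) * dist x z := by rw [dist_eq_norm]; push_cast; ring
  have hz := sub_le_legendreOn hR hb z hy
  rw [sub_dotProduct] at hpair
  linarith

end

lemma isBounded_setOf_neg_one_le_dotProduct {ι : Type*} {n : ℕ} {v : ι → Fin n → ℝ}
    (hv : 0 ∈ interior (convexHull ℝ (Set.range v))) :
    Bornology.IsBounded {y | ∀ i, -1 ≤ y ⬝ᵥ v i} := by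
  obtain ⟨δ, hδ, hball⟩ := nhds_basis_closedBall.mem_iff.1 (mem_interior_iff_mem_nhds.1 hv)
  refine isBounded_iff_forall_norm_le.2 ⟨δ⁻¹, fun y hy ↦ ?_⟩
  have hhull : convexHull ℝ (Set.range v) ⊆ {x | -1 ≤ y ⬝ᵥ x} :=
    convexHull_min (Set.range_subset_iff.2 hy)
      (convex_halfSpace_ge ⟨dotProduct_add y, fun a ↦ dotProduct_smul a y⟩ _)
  have hsingle (j : Fin n) {a : ℝ} (ha : |a| ≤ δ) : -1 ≤ y j * a := by
    rw [← dotProduct_single]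
    exact hhull (hball (by simpa [Pi.norm_single] using ha))
  refine (pi_norm_le_iff_of_nonneg (inv_nonneg.2 hδ.le)).2 fun j ↦ ?_
  have hpos := hsingle j (abs_of_pos hδ).le
  have hneg := hsingle j (a := -δ) (by rw [abs_neg, abs_of_pos hδ])
  rw [Real.norm_eq_abs, ← one_div, le_div_iff₀ hδ, ← abs_of_pos hδ, ← abs_mul, abs_le]
  constructor <;> linarith

section

variable {n d : ℕ} {N : Fin d → Fin n → ℤ}

lemma zero_mem_interior_Pset : (0 : Fin n → ℝ) ∈ interior (Pset N) := by
  refine mem_interior_iff_mem_nhds.2 (eventually_all.2 fun i ↦ ?_)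
  have hcont : Continuous fun y : Fin n → ℝ ↦ ∑ j, y j * (N i j : ℝ) := by fun_prop
  exact (hcont.continuousAt.eventually_const_lt (by simp)).mono fun _ ↦ le_of_lt

lemma volume_interior_Pset_ne_zero : volume (interior (Pset N)) ≠ 0 :=
  (isOpen_interior.measure_pos volume ⟨0, zero_mem_interior_Pset⟩).ne'

lemma isBounded_Pset
    (hQ : (0 : Fin n → ℝ) ∈ interior (convexHull ℝ (Set.range fun i j ↦ (N i j : ℝ)))) :
    Bornology.IsBounded (Pset N) :=
  isBounded_setOf_neg_one_le_dotProduct hQ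

lemma neg_card_le_u0 {y : Fin n → ℝ} (hy : y ∈ Pset N) : -(d : ℝ) ≤ u0 N y := by
  have hterm (i : Fin d) : -1 ≤ lfun N i y * Real.log (lfun N i y) := by
    have hl : 0 ≤ lfun N i y := by linarith [hy i, show lfun N i y = _ + 1 from rfl]
    have hkl := InformationTheory.klFun_nonneg hl
    rw [InformationTheory.klFun] at hkl
    linarith
  simpa [u0] using Finset.sum_le_sum fun i (_ : i ∈ Finset.univ) ↦ hterm i

variable {R : ℝ≥0}

lemma convexOn_phi0 (hR : ∀ y ∈ Pset N, ‖y‖ ≤ R) : ConvexOn ℝ Set.univ (phi0 N) :=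
  convexOn_legendreOn ⟨0, zero_mem_interior_Pset⟩ (fun y hy ↦ hR y (interior_subset hy))
    fun _ hy ↦ neg_card_le_u0 (interior_subset hy)

lemma lipschitzWith_phi0 (hR : ∀ y ∈ Pset N, ‖y‖ ≤ R) : LipschitzWith (n * R) (phi0 N) :=
  lipschitzWith_legendreOn ⟨0, zero_mem_interior_Pset⟩ (fun y hy ↦ hR y (interior_subset hy))
    fun _ hy ↦ neg_card_le_u0 (interior_subset hy)

namespace IsSolution

variable {c : Fin n → ℝ} {c₀ t ε : ℝ} {φ : (Fin n → ℝ) → ℝ}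

lemma norm_grad_le (h : IsSolution N c c₀ t φ) (hR : ∀ y ∈ Pset N, ‖y‖ ≤ R) (x : Fin n → ℝ) :
    ‖grad φ x‖ ≤ R :=
  hR _ (interior_subset (h.2.2.1.mapsTo (Set.mem_univ x)))

lemma isMongeAmperePotential (h : IsSolution N c c₀ t φ) (hR : ∀ y ∈ Pset N, ‖y‖ ≤ R) :
    IsMongeAmperePotential (interior (Pset N)) (wfun N t φ) (|c₀| + n * ‖c‖ * R) φ where
  contDiff := contDiff_infty.1 h.1 2
  convexOn := h.2.1.convexOn
  bijOn := h.2.2.1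
  det_mem x := by
    have hpair : |dotp c (grad φ x)| ≤ n * ‖c‖ * R :=
      (abs_dotProduct_le c (grad φ x)).trans (by gcongr; exact h.norm_grad_le hR x)
    rw [h.2.2.2.2 x, Set.mem_Icc, Real.exp_le_exp, Real.exp_le_exp]
    constructor <;> linarith [abs_le.1 hpair, neg_abs_le c₀, le_abs_self c₀]

lemma lipschitzWith_wfun (h : IsSolution N c c₀ t φ) (hR : ∀ y ∈ Pset N, ‖y‖ ≤ R)
    (ht : t ∈ Set.Icc 0 1) : LipschitzWith (n * R) (wfun N t φ) := by
  have hφ : LipschitzWith (n * R) φ := lipschitzWith_of_norm_grad_le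
    (h.1.differentiable (by simp)) (h.norm_grad_le hR)
  refine LipschitzWith.of_le_add_mul _ fun x z ↦ ?_
  have hφxz := mul_le_mul_of_nonneg_left (hφ.le_add_mul x z) ht.1
  have hphi0xz := mul_le_mul_of_nonneg_left ((lipschitzWith_phi0 hR).le_add_mul x z)
    (sub_nonneg.2 ht.2)
  simp only [wfun]
  linarith

lemma convexOn_wfun_sub_smul (h : IsSolution N c c₀ t φ) (hR : ∀ y ∈ Pset N, ‖y‖ ≤ R)
    (ht : t ∈ Set.Icc ε 1) : ConvexOn ℝ Set.univ (wfun N t φ - ε • φ) := by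
  convert! (h.2.1.convexOn.smul (sub_nonneg.2 ht.1)).add
    ((convexOn_phi0 hR).smul (sub_nonneg.2 ht.2)) using 1
  ext x
  simp only [wfun, Pi.sub_apply, Pi.add_apply, Pi.smul_apply, smul_eq_mul]
  ring

end IsSolution

end

/-- Lemma 4.1: uniform bound `|m_t| ≤ C` for `m_t = inf_{ℝⁿ} w_t`, uniformly over
`t ∈ [ε₀,1]` and over solutions `φ` at parameter `t`. -/
theorem inf_w_bounded {n d : ℕ} (hn : 1 ≤ n) (N : Fin d → Fin n → ℤ)
    (hQ : (0 : Fin n → ℝ) ∈ interior (convexHull ℝ (Set.range fun i => fun j => (N i j : ℝ))))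
    (c : Fin n → ℝ) (c₀ : ℝ) (ε₀ : ℝ) (hε₀ : ε₀ ∈ Set.Ioc (0 : ℝ) 1) :
    ∃ C > 0, ∀ t ∈ Set.Icc ε₀ 1, ∀ φ : (Fin n → ℝ) → ℝ, IsSolution N c c₀ t φ →
      |sInf (Set.range (wfun N t φ))| ≤ C := by
  obtain ⟨R, hR₀, hR⟩ := (isBounded_Pset hQ).exists_pos_norm_le
  lift R to ℝ≥0 using hR₀.le
  obtain ⟨C, hC, hbound⟩ := inf_w_bounded_general volume_interior_Pset_ne_zero
    ((isBounded_Pset hQ).subset interior_subset).measure_lt_top.ne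
    (n * R) (|c₀| + n * ‖c‖ * R) hε₀.1
  exact ⟨C, hC, fun t ht φ h ↦ hbound _ φ (h.isMongeAmperePotential hR)
    (h.lipschitzWith_wfun hR ⟨hε₀.1.le.trans ht.1, ht.2⟩) (h.convexOn_wfun_sub_smul hR ht)⟩
end
end
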